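/- Fix x₀ ∈ [0,1] and L ∈ ℝ. Let (δ_k) be a sequence of positive reals with δ_k → 0 and (N_k) a sequence of positive integers with N_k → ∞ such that there is a constant c > 0 with N_k·δ_k ≥ c for all k. Then lim_{k→∞} (1/N_k)·#{ j ∈ {1, …, N_k} : log q_min(x₀ + j/N_k, δ_k) > L − (1/2)·log δ_k } = ∫_L^∞ η_log(s) ds. -/

import Mathlib

open MeasureTheory Filter
open scoped Classical

/-- The limiting density of the logarithm of smallest denominators. -/
noncomputable def etaLog (s : ℝ) : ℝ :=
  if s ≤ 0 then 6 / Real.pi ^ 2 * Real.exp (2 * s)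
  else if s ≤ Real.log 2 then 6 / Real.pi ^ 2 * (-Real.exp (2 * s) + 2 + 4 * s)
  else 6 / Real.pi ^ 2 * (-Real.exp (2 * s) + 2
    + 2 * Real.exp (2 * s) * Real.sqrt (1 / 4 - Real.exp (-2 * s))
    - 4 * Real.log (1 / 2 + Real.sqrt (1 / 4 - Real.exp (-2 * s))))

/-- The smallest denominator of all rationals in the interval `(x - δ/2, x + δ/2)`. -/
noncomputable def qmin (x δ : ℝ) : ℕ :=
  sInf {q : ℕ | 0 < q ∧ ∃ p : ℤ, x - δ / 2 < (p : ℝ) / q ∧ (p : ℝ) / q < x + δ / 2}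


theorem kl_orth {q : ℕ} [NeZero q] {ι : Type*} [Fintype ι] (x y : ι → ZMod q) :
    ∑ a : ZMod q, ∑ b : ZMod q, ‖∑ i, ZMod.stdAddChar (a * x i + b * y i)‖ ^ 2
      = (q : ℝ) ^ 2 * ((Finset.univ.filter
          (fun p : ι × ι => x p.1 = x p.2 ∧ y p.1 = y p.2)).card : ℝ) := by
  have hs : ∀ z : ZMod q, ∑ a : ZMod q, ZMod.stdAddChar (a * z) = if z = 0 then (q : ℂ) else 0 := by
    intro z
    have := AddChar.sum_mulShift (R := ZMod q) (ψ := ZMod.stdAddChar (N := q)) z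
      (ZMod.isPrimitive_stdAddChar q)
    simpa [ZMod.card] using this
  have key : ∀ a b : ZMod q, ((‖∑ i, ZMod.stdAddChar (a * x i + b * y i)‖ ^ 2 : ℝ) : ℂ)
      = ∑ p : ι × ι, ZMod.stdAddChar (a * (x p.1 - x p.2)) * ZMod.stdAddChar (b * (y p.1 - y p.2)) := by
    intro a b
    rw [← Complex.normSq_eq_norm_sq, ← Complex.mul_conj, map_sum, Finset.sum_mul_sum,
      Fintype.sum_prod_type]
    refine Finset.sum_congr rfl fun i _ => Finset.sum_congr rfl fun j _ => ?_
    rw [← AddChar.map_neg_eq_conj, ← AddChar.map_add_eq_mul, ← AddChar.map_add_eq_mul]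
    congr 1; ring
  have : ((∑ a : ZMod q, ∑ b : ZMod q, ‖∑ i, ZMod.stdAddChar (a * x i + b * y i)‖ ^ 2 : ℝ) : ℂ)
      = (((q : ℝ) ^ 2 * ((Finset.univ.filter
          (fun p : ι × ι => x p.1 = x p.2 ∧ y p.1 = y p.2)).card : ℝ) : ℝ) : ℂ) := by
    rw [Complex.ofReal_sum]
    simp_rw [Complex.ofReal_sum, key]
    have : ∀ a : ZMod q, ∑ b : ZMod q, ∑ p : ι × ι, ZMod.stdAddChar (a * (x p.1 - x p.2)) * ZMod.stdAddChar (b * (y p.1 - y p.2)) = ∑ p : ι × ι, ZMod.stdAddChar (a * (x p.1 - x p.2)) * (if y p.1 - y p.2 = 0 then (q : ℂ) else 0) := by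
      intro a
      rw [Finset.sum_comm]
      refine Finset.sum_congr rfl fun p _ => ?_
      rw [← Finset.mul_sum, hs]
    simp_rw [this]
    rw [Finset.sum_comm]
    simp_rw [← Finset.sum_mul, hs, sub_eq_zero]
    push_cast
    rw [Finset.card_filter, Nat.cast_sum, Finset.mul_sum]
    refine Finset.sum_congr rfl fun p _ => ?_
    by_cases h1 : x p.1 = x p.2 <;> by_cases h2 : y p.1 = y p.2 <;> simp [h1, h2, pow_two]
  exact_mod_cast this

theorem kl_orth1 {q : ℕ} [NeZero q] (A : Finset (ZMod q)) :
    ∑ b : ZMod q, ‖∑ i ∈ A, ZMod.stdAddChar (b * i)‖ ^ 2 = (q : ℝ) * (A.card : ℝ) := by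
  have h := kl_orth (q := q) (ι := A) (fun _ => 0) (fun i => (i : ZMod q))
  simp only [mul_zero, zero_add, Finset.sum_const, Finset.card_univ, ZMod.card, true_and] at h
  have h2 : (Finset.univ.filter (fun p : A × A => (p.1 : ZMod q) = p.2)).card = A.card := by
    rw [Finset.card_filter, Fintype.sum_prod_type]
    simp_rw [← Subtype.ext_iff]
    simp
  rw [h2] at h
  have hq : (q : ℝ) ≠ 0 := Nat.cast_ne_zero.2 (NeZero.ne q)
  have h3 : ∀ b : ZMod q, ∑ i : A, ZMod.stdAddChar (b * (i : ZMod q)) = ∑ i ∈ A, ZMod.stdAddChar (b * i) := by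
    intro b
    exact Finset.sum_coe_sort A (fun i => ZMod.stdAddChar (b * i))
  simp_rw [h3] at h
  rw [nsmul_eq_mul] at h
  have : (q : ℝ) * (∑ b : ZMod q, ‖∑ i ∈ A, ZMod.stdAddChar (b * i)‖ ^ 2) = q * (q * A.card) := by
    rw [h]; ring
  exact mul_left_cancel₀ hq this

/-- number of solutions of a * w = 0 -/
theorem kl_annih {q : ℕ} [NeZero q] (a : ZMod q) :
    (Finset.univ.filter (fun w : ZMod q => a * w = 0)).card ≤ Nat.gcd a.val q := by
  have hpos : 0 < Nat.gcd a.val q := Nat.gcd_pos_of_pos_right _ (NeZero.pos q)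
  refine le_trans (Finset.card_le_card ?_) (IsAddCyclic.card_nsmul_eq_zero_le (α := ZMod q) hpos)
  intro w hw
  simp only [Finset.mem_filter, Finset.mem_univ, true_and, nsmul_eq_mul] at hw ⊢
  have h1 : ((a.val * w.val : ℕ) : ZMod q) = 0 := by push_cast; simpa using hw
  rw [ZMod.natCast_eq_zero_iff] at h1
  have h2 : q ∣ Nat.gcd a.val q * w.val := by
    rw [← Nat.gcd_mul_right]
    exact Nat.dvd_gcd h1 (Dvd.intro _ rfl)
  have := (ZMod.natCast_eq_zero_iff _ q).2 h2
  push_cast at this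
  simpa using this

theorem kl_pillai {q : ℕ} [NeZero q] :
    ∑ x : ZMod q, Nat.gcd x.val q ≤ q * q.divisors.card := by
  have hq : q ≠ 0 := NeZero.ne q
  have h1 : ∑ x : ZMod q, Nat.gcd x.val q = ∑ d ∈ q.divisors,
      ∑ x ∈ Finset.univ.filter (fun x : ZMod q => Nat.gcd x.val q = d), Nat.gcd x.val q := by
    rw [Finset.sum_fiberwise_of_maps_to]
    intro x _
    simp [hq, Nat.gcd_dvd_right]
  rw [h1, mul_comm, ← smul_eq_mul, ← Finset.sum_const]
  refine Finset.sum_le_sum fun d hd => ?_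
  have hd' : d ∣ q := Nat.dvd_of_mem_divisors hd
  have hdp : 0 < d := Nat.pos_of_mem_divisors hd
  have hqd : 0 < q / d := Nat.div_pos (Nat.le_of_dvd (NeZero.pos q) hd') hdp
  rw [Finset.sum_congr rfl (g := fun _ => d) (by intro x hx; simpa using hx), Finset.sum_const, smul_eq_mul]
  have : (Finset.univ.filter (fun x : ZMod q => Nat.gcd x.val q = d)).card ≤ q / d := by
    refine le_trans (Finset.card_le_card ?_) (IsAddCyclic.card_nsmul_eq_zero_le (α := ZMod q) hqd)
    intro w hw
    simp only [Finset.mem_filter, Finset.mem_univ, true_and, nsmul_eq_mul] at hw ⊢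
    have h2 : q ∣ q / d * w.val := by
      have : d ∣ w.val := hw ▸ Nat.gcd_dvd_left _ _
      calc q = q / d * d := (Nat.div_mul_cancel hd').symm
        _ ∣ _ := Nat.mul_dvd_mul_left _ this
    have := (ZMod.natCast_eq_zero_iff _ q).2 h2
    rw [Nat.cast_mul] at this
    simpa using this
  calc _ ≤ q / d * d := Nat.mul_le_mul_right _ this
    _ = q := Nat.div_mul_cancel hd'

theorem kl_xyz {q : ℕ} [NeZero q] :
    (Finset.univ.filter (fun p : ZMod q × ZMod q × ZMod q => p.1 * p.2.1 * p.2.2 = 0)).card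
      ≤ (q * q.divisors.card) ^ 2 := by
  have h1 : (Finset.univ.filter (fun p : ZMod q × ZMod q × ZMod q => p.1 * p.2.1 * p.2.2 = 0)).card
      = ∑ x : ZMod q, ∑ y : ZMod q, (Finset.univ.filter (fun z : ZMod q => x * y * z = 0)).card := by
    simp_rw [Finset.card_filter]
    rw [Fintype.sum_prod_type]
    refine Finset.sum_congr rfl fun x _ => ?_
    rw [Fintype.sum_prod_type]
  rw [h1]
  calc _ ≤ ∑ x : ZMod q, ∑ y : ZMod q, Nat.gcd x.val q * Nat.gcd y.val q := by
        refine Finset.sum_le_sum fun x _ => Finset.sum_le_sum fun y _ => ?_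
        refine (kl_annih (x * y)).trans ?_
        rw [ZMod.val_mul]
        have : Nat.gcd (x.val * y.val % q) q = Nat.gcd (x.val * y.val) q :=
          (Nat.mod_modEq _ q).gcd_eq
        rw [this]
        exact Nat.le_of_dvd (Nat.mul_pos (Nat.gcd_pos_of_pos_right _ (NeZero.pos q)) (Nat.gcd_pos_of_pos_right _ (NeZero.pos q))) (Nat.gcd_mul_left_dvd_mul_gcd _ _ _)
    _ = (∑ x : ZMod q, Nat.gcd x.val q) ^ 2 := by rw [pow_two, Finset.sum_mul_sum]
    _ ≤ _ := Nat.pow_le_pow_left kl_pillai 2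


/-- Kloosterman sum. -/
noncomputable def klSum {q : ℕ} [NeZero q] (a b : ZMod q) : ℂ :=
  ∑ u : (ZMod q)ˣ, ZMod.stdAddChar (a * ((u⁻¹ : (ZMod q)ˣ) : ZMod q) + b * (u : ZMod q))

theorem kl_sol {q : ℕ} [NeZero q] :
    (Finset.univ.filter (fun p : ((ZMod q)ˣ × (ZMod q)ˣ) × ((ZMod q)ˣ × (ZMod q)ˣ) =>
      ((p.1.1⁻¹ : (ZMod q)ˣ) : ZMod q) + ((p.1.2⁻¹ : (ZMod q)ˣ) : ZMod q)
        = ((p.2.1⁻¹ : (ZMod q)ˣ) : ZMod q) + ((p.2.2⁻¹ : (ZMod q)ˣ) : ZMod q) ∧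
      (p.1.1 : ZMod q) + (p.1.2 : ZMod q) = (p.2.1 : ZMod q) + (p.2.2 : ZMod q))).card
      ≤ 2 * (q * q.divisors.card) ^ 2 := by
  set S := (Finset.univ.filter (fun p : ((ZMod q)ˣ × (ZMod q)ˣ) × ((ZMod q)ˣ × (ZMod q)ˣ) =>
      ((p.1.1⁻¹ : (ZMod q)ˣ) : ZMod q) + ((p.1.2⁻¹ : (ZMod q)ˣ) : ZMod q)
        = ((p.2.1⁻¹ : (ZMod q)ˣ) : ZMod q) + ((p.2.2⁻¹ : (ZMod q)ˣ) : ZMod q) ∧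
      (p.1.1 : ZMod q) + (p.1.2 : ZMod q) = (p.2.1 : ZMod q) + (p.2.2 : ZMod q))) with hS
  set f : ((ZMod q)ˣ × (ZMod q)ˣ) × ((ZMod q)ˣ × (ZMod q)ˣ) → ZMod q × ZMod q × ZMod q :=
    fun p => ((p.1.1 : ZMod q) + p.1.2, (p.1.1 : ZMod q) - p.2.1, (p.1.2 : ZMod q) - p.2.1) with hf
  set T := (Finset.univ.filter (fun p : ZMod q × ZMod q × ZMod q => p.1 * p.2.1 * p.2.2 = 0)) with hT
  have hmap : ∀ p ∈ S, f p ∈ T := by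
    rintro ⟨⟨r1, r2⟩, ⟨r3, r4⟩⟩ hp
    simp only [hS, hT, hf, Finset.mem_filter, Finset.mem_univ, true_and] at hp ⊢
    obtain ⟨h1, h2⟩ := hp
    have e1 : (r1 : ZMod q) * ((r1⁻¹ : (ZMod q)ˣ) : ZMod q) = 1 := r1.mul_inv
    have e2 : (r2 : ZMod q) * ((r2⁻¹ : (ZMod q)ˣ) : ZMod q) = 1 := r2.mul_inv
    have e3 : (r3 : ZMod q) * ((r3⁻¹ : (ZMod q)ˣ) : ZMod q) = 1 := r3.mul_inv
    have e4 : (r4 : ZMod q) * ((r4⁻¹ : (ZMod q)ˣ) : ZMod q) = 1 := r4.mul_inv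
    generalize (r1 : ZMod q) = a at *
    generalize (r2 : ZMod q) = b at *
    generalize (r3 : ZMod q) = c at *
    generalize (r4 : ZMod q) = d at *
    generalize ((r1⁻¹ : (ZMod q)ˣ) : ZMod q) = a' at *
    generalize ((r2⁻¹ : (ZMod q)ˣ) : ZMod q) = b' at *
    generalize ((r3⁻¹ : (ZMod q)ˣ) : ZMod q) = c' at *
    generalize ((r4⁻¹ : (ZMod q)ˣ) : ZMod q) = d' at *
    have hd : d = a + b - c := by rw [h2]; ring
    -- (a+b) c d = (c+d) a b
    have h3 : (a + b) * (c * d) = (c + d) * (a * b) := by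
      have l : a * b * c * d * (a' + b') = (a + b) * (c * d) := by
        calc _ = (a * a') * (b * c * d) + (b * b') * (a * c * d) := by ring
          _ = _ := by rw [e1, e2]; ring
      have r : a * b * c * d * (c' + d') = (c + d) * (a * b) := by
        calc _ = (c * c') * (a * b * d) + (d * d') * (a * b * c) := by ring
          _ = _ := by rw [e3, e4]; ring
      rw [← l, ← r, h1]
    rw [hd] at h3
    have : (a + b) * (a - c) * (b - c) = - ((a + b) * (c * (a + b - c)) - (c + (a + b - c)) * (a * b)) := by ring
    rw [this, h3]; ring
  refine (Finset.card_le_mul_card_image_of_maps_to (f := f) hmap 2 ?_).trans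
    (Nat.mul_le_mul_left 2 kl_xyz)
  rintro ⟨x, y, z⟩ _
  -- fibre
  have hinj : (S.filter (fun p => f p = (x, y, z))).card ≤
      (Finset.univ.filter (fun w : ZMod q => 2 * w = x + y - z)).card := by
    refine Finset.card_le_card_of_injOn (fun p => (p.1.1 : ZMod q)) ?_ ?_
    · rintro ⟨⟨r1, r2⟩, ⟨r3, r4⟩⟩ hp
      simp only [hf, Finset.coe_filter, Set.mem_ofPred_eq, Prod.mk.injEq, Finset.mem_univ, true_and] at hp ⊢
      obtain ⟨_, h1, h2, h3⟩ := hp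
      rw [← h1, ← h2, ← h3]; ring
    · rintro ⟨⟨r1, r2⟩, ⟨r3, r4⟩⟩ hp ⟨⟨s1, s2⟩, ⟨s3, s4⟩⟩ hp' h
      simp only [hS, hf, Finset.coe_filter, Finset.mem_filter, Set.mem_ofPred_eq, Prod.mk.injEq, Finset.mem_univ, true_and] at hp hp' h ⊢
      obtain ⟨⟨_, g⟩, h1, h2, h3⟩ := hp
      obtain ⟨⟨_, g'⟩, h1', h2', h3'⟩ := hp'
      have k1 : (r1 : ZMod q) = s1 := h
      have k2 : (r2 : ZMod q) = s2 := by
        rw [k1] at h1; exact add_left_cancel (h1.trans h1'.symm)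
      have k3 : (r3 : ZMod q) = s3 := by
        rw [k1] at h2; exact sub_right_injective (h2.trans h2'.symm)
      have k4 : (r4 : ZMod q) = s4 := by
        rw [k1, k2, k3] at g; exact add_left_cancel (g.symm.trans g')
      exact ⟨⟨Units.ext k1, Units.ext k2⟩, ⟨Units.ext k3, Units.ext k4⟩⟩
  refine hinj.trans ?_
  by_cases hex : ∃ w0 : ZMod q, 2 * w0 = x + y - z
  · obtain ⟨w0, hw0⟩ := hex
    refine le_trans ?_ (IsAddCyclic.card_nsmul_eq_zero_le (α := ZMod q) (n := 2) (by norm_num))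
    refine Finset.card_le_card_of_injOn (fun w => w - w0) ?_ ?_
    · intro w hw
      simp only [Finset.coe_filter, Set.mem_ofPred_eq, Finset.mem_univ, true_and, nsmul_eq_mul] at hw ⊢
      push_cast
      rw [mul_sub, hw, hw0, sub_self]
    · intro a _ b _ h
      exact sub_left_injective h
  · push Not at hex
    rw [Finset.filter_false_of_mem (by intro w _; exact hex w)]
    simp

theorem kl_moment {q : ℕ} [NeZero q] :
    ∑ a : ZMod q, ∑ b : ZMod q, ‖klSum a b‖ ^ 4 ≤ (q : ℝ) ^ 2 * (2 * (q * q.divisors.card) ^ 2) := by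
  have h := kl_orth (q := q) (ι := (ZMod q)ˣ × (ZMod q)ˣ)
    (fun p => ((p.1⁻¹ : (ZMod q)ˣ) : ZMod q) + ((p.2⁻¹ : (ZMod q)ˣ) : ZMod q))
    (fun p => (p.1 : ZMod q) + (p.2 : ZMod q))
  have h2 : ∀ a b : ZMod q, ‖klSum a b‖ ^ 4 = ‖∑ p : (ZMod q)ˣ × (ZMod q)ˣ,
      ZMod.stdAddChar (a * (((p.1⁻¹ : (ZMod q)ˣ) : ZMod q) + ((p.2⁻¹ : (ZMod q)ˣ) : ZMod q)) + b * ((p.1 : ZMod q) + (p.2 : ZMod q)))‖ ^ 2 := by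
    intro a b
    rw [show ‖klSum a b‖ ^ 4 = ‖klSum a b * klSum a b‖ ^ 2 by rw [norm_mul]; ring]
    congr 2
    rw [klSum, Finset.sum_mul_sum, Fintype.sum_prod_type]
    refine Finset.sum_congr rfl fun i _ => Finset.sum_congr rfl fun j _ => ?_
    rw [← AddChar.map_add_eq_mul]
    congr 1; ring
  simp_rw [h2]
  rw [h]
  gcongr
  exact_mod_cast kl_sol

theorem kl_twist {q : ℕ} [NeZero q] (a b : ZMod q) (t : (ZMod q)ˣ) :
    klSum (a * (t : ZMod q)) (b * ((t⁻¹ : (ZMod q)ˣ) : ZMod q)) = klSum a b := by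
  unfold klSum
  refine (Fintype.sum_equiv (Equiv.mulLeft t) _ _ fun u => ?_).symm
  simp only [Equiv.coe_mulLeft, mul_inv_rev, Units.val_mul]
  congr 1
  have e1 : (t : ZMod q) * ((t⁻¹ : (ZMod q)ˣ) : ZMod q) = 1 := t.mul_inv
  linear_combination (-(a * ((u⁻¹ : (ZMod q)ˣ) : ZMod q)) - b * u) * e1

theorem tot_tau (q : ℕ) (hq : 0 < q) : q ≤ q.totient * q.divisors.card := by
  conv_lhs => rw [← Nat.sum_totient q]
  rw [mul_comm, ← smul_eq_mul, ← Finset.sum_const]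
  refine Finset.sum_le_sum fun d hd => ?_
  exact Nat.le_of_dvd (Nat.totient_pos.2 hq) (Nat.totient_dvd_of_dvd (Nat.dvd_of_mem_divisors hd))

theorem kl_bound {q : ℕ} [NeZero q] (a b : ZMod q) :
    ‖klSum a b‖ ^ 4 ≤ 2 * (Nat.gcd a.val q : ℝ) * q ^ 3 * (q.divisors.card : ℝ) ^ 3 := by
  have hq : (0 : ℝ) < q := Nat.cast_pos.2 (NeZero.pos q)
  have h1 : (q.totient : ℝ) * ‖klSum a b‖ ^ 4 ≤ (Nat.gcd a.val q : ℝ) *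
      ∑ p : ZMod q × ZMod q, ‖klSum p.1 p.2‖ ^ 4 := by
    have : (q.totient : ℝ) * ‖klSum a b‖ ^ 4 = ∑ t : (ZMod q)ˣ, ‖klSum (a * (t : ZMod q)) (b * ((t⁻¹ : (ZMod q)ˣ) : ZMod q))‖ ^ 4 := by
      simp_rw [kl_twist]
      simp [ZMod.card_units_eq_totient]
    rw [this]
    rw [← Finset.sum_fiberwise (s := (Finset.univ : Finset (ZMod q)ˣ)) (fun t => (a * (t : ZMod q), b * ((t⁻¹ : (ZMod q)ˣ) : ZMod q))), Finset.mul_sum]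
    refine Finset.sum_le_sum fun p _ => ?_
    rw [Finset.sum_congr rfl (g := fun _ => ‖klSum p.1 p.2‖ ^ 4) (by
      intro t ht
      simp only [Finset.mem_filter, Finset.mem_univ, true_and] at ht
      rw [← ht]), Finset.sum_const, nsmul_eq_mul]
    gcongr
    by_cases hex : ∃ t0 : (ZMod q)ˣ, (a * (t0 : ZMod q), b * ((t0⁻¹ : (ZMod q)ˣ) : ZMod q)) = p
    · obtain ⟨t0, ht0⟩ := hex
      refine le_trans ?_ (kl_annih a)
      refine Finset.card_le_card_of_injOn (fun t => (t : ZMod q) - t0) ?_ ?_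
      · intro t ht
        simp only [Finset.coe_filter, Set.mem_ofPred_eq, Finset.mem_univ, true_and] at ht ⊢
        rw [← ht0] at ht
        rw [mul_sub, (Prod.mk.inj ht).1, sub_self]
      · intro t _ s _ h
        exact Units.ext (sub_left_injective h)
    · push Not at hex
      rw [Finset.filter_false_of_mem (by intro w _; exact hex w)]
      simp
  rw [Fintype.sum_prod_type] at h1
  have h2 := kl_moment (q := q)
  have h3 : (q : ℝ) ≤ q.totient * q.divisors.card := by exact_mod_cast tot_tau q (NeZero.pos q)
  have h4 : (q : ℝ) * ‖klSum a b‖ ^ 4 ≤ q * (2 * (Nat.gcd a.val q : ℝ) * q ^ 3 * (q.divisors.card : ℝ) ^ 3) := by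
    calc (q : ℝ) * ‖klSum a b‖ ^ 4 ≤ (q.totient * q.divisors.card) * ‖klSum a b‖ ^ 4 := by gcongr
      _ = q.divisors.card * (q.totient * ‖klSum a b‖ ^ 4) := by ring
      _ ≤ q.divisors.card * ((Nat.gcd a.val q : ℝ) * ((q : ℝ) ^ 2 * (2 * (q * q.divisors.card) ^ 2))) := by
          refine mul_le_mul_of_nonneg_left (h1.trans ?_) (Nat.cast_nonneg _)
          exact mul_le_mul_of_nonneg_left h2 (Nat.cast_nonneg _)
      _ = _ := by ring
  exact le_of_mul_le_mul_left h4 hq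

/-- the kernel -/
noncomputable def klK {q : ℕ} [NeZero q] (a r : ZMod q) : ℂ :=
  if IsUnit r then ZMod.stdAddChar (a * r⁻¹) else 0

theorem klK_norm {q : ℕ} [NeZero q] (a r : ZMod q) : ‖klK a r‖ ≤ 1 := by
  unfold klK
  split_ifs <;> simp

theorem klK_eq {q : ℕ} [NeZero q] (a r : ZMod q) :
    (q : ℂ) * klK a r = ∑ b : ZMod q, klSum a b * ZMod.stdAddChar (b * (-r)) := by
  have hs : ∀ z : ZMod q, ∑ a : ZMod q, ZMod.stdAddChar (a * z) = if z = 0 then (q : ℂ) else 0 := by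
    intro z
    have := AddChar.sum_mulShift (R := ZMod q) (ψ := ZMod.stdAddChar (N := q)) z
      (ZMod.isPrimitive_stdAddChar q)
    simpa [ZMod.card] using this
  have : ∀ b : ZMod q, klSum a b * ZMod.stdAddChar (b * (-r)) = ∑ u : (ZMod q)ˣ, ZMod.stdAddChar (a * ((u⁻¹ : (ZMod q)ˣ) : ZMod q)) * ZMod.stdAddChar (b * ((u : ZMod q) - r)) := by
    intro b
    rw [klSum, Finset.sum_mul]
    refine Finset.sum_congr rfl fun u _ => ?_
    rw [← AddChar.map_add_eq_mul, ← AddChar.map_add_eq_mul]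
    congr 1; ring
  simp_rw [this]
  rw [Finset.sum_comm]
  simp_rw [← Finset.mul_sum, hs, sub_eq_zero]
  unfold klK
  split_ifs with h
  · obtain ⟨v, rfl⟩ := h
    rw [Finset.sum_eq_single v]
    · simp [mul_comm, ZMod.inv_coe_unit]
    · intro u _ hu
      rw [if_neg (fun h => hu (Units.ext h)), mul_zero]
    · simp
  · rw [mul_zero]
    symm
    refine Finset.sum_eq_zero fun u _ => ?_
    rw [if_neg (fun h' : (u : ZMod q) = r => h (h' ▸ u.isUnit)), mul_zero]

theorem klK_bilinear {q : ℕ} [NeZero q] (a : ZMod q) (A B : Finset (ZMod q)) (S : ℝ)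
    (hS : ∀ b, ‖klSum a b‖ ≤ S) :
    ‖∑ x ∈ A, ∑ y ∈ B, klK a (x + y)‖ ≤ S * Real.sqrt (A.card * B.card) := by
  have hS0 : 0 ≤ S := (norm_nonneg _).trans (hS 0)
  have hq : (0 : ℝ) < q := Nat.cast_pos.2 (NeZero.pos q)
  have h1 : (q : ℂ) * ∑ x ∈ A, ∑ y ∈ B, klK a (x + y) =
      ∑ b : ZMod q, klSum a b * ((∑ x ∈ A, ZMod.stdAddChar ((-b) * x)) * (∑ y ∈ B, ZMod.stdAddChar ((-b) * y))) := by
    simp_rw [Finset.sum_mul_sum, Finset.mul_sum, klK_eq]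
    rw [Finset.sum_comm (s := (Finset.univ : Finset (ZMod q))) (t := A)]
    refine Finset.sum_congr rfl fun x _ => ?_
    rw [Finset.sum_comm]
    refine Finset.sum_congr rfl fun b _ => Finset.sum_congr rfl fun y _ => ?_
    rw [← AddChar.map_add_eq_mul]
    congr 2; ring
  have h2 : (q : ℝ) * ‖∑ x ∈ A, ∑ y ∈ B, klK a (x + y)‖ ≤ S * (∑ b : ZMod q,
      ‖∑ x ∈ A, ZMod.stdAddChar (b * x)‖ * ‖∑ y ∈ B, ZMod.stdAddChar (b * y)‖) := by
    have : (q : ℝ) * ‖∑ x ∈ A, ∑ y ∈ B, klK a (x + y)‖ = ‖(q : ℂ) * ∑ x ∈ A, ∑ y ∈ B, klK a (x + y)‖ := by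
      rw [norm_mul]; simp
    rw [this, h1]
    refine (norm_sum_le _ _).trans ?_
    rw [← Equiv.sum_comp (Equiv.neg (ZMod q)) (fun b => ‖∑ x ∈ A, ZMod.stdAddChar (b * x)‖ * ‖∑ y ∈ B, ZMod.stdAddChar (b * y)‖), Finset.mul_sum]
    refine Finset.sum_le_sum fun b _ => ?_
    rw [norm_mul, norm_mul]
    simp only [Equiv.neg_apply]
    gcongr
    exact hS b
  have h3 := Real.sum_mul_le_sqrt_mul_sqrt (Finset.univ : Finset (ZMod q)) (fun b => ‖∑ x ∈ A, ZMod.stdAddChar (b * x)‖) (fun b => ‖∑ y ∈ B, ZMod.stdAddChar (b * y)‖)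
  rw [kl_orth1, kl_orth1, ← Real.sqrt_mul (by positivity)] at h3
  have h4 : √((q : ℝ) * A.card * (q * B.card)) = q * √(A.card * B.card) := by
    rw [show (q : ℝ) * A.card * (q * B.card) = q ^ 2 * (A.card * B.card) by ring,
      Real.sqrt_mul (by positivity), Real.sqrt_sq hq.le]
  rw [h4] at h3
  have : (q : ℝ) * ‖∑ x ∈ A, ∑ y ∈ B, klK a (x + y)‖ ≤ q * (S * √(A.card * B.card)) := by
    refine h2.trans ((mul_le_mul_of_nonneg_left h3 hS0).trans (le_of_eq ?_)); ring
  exact le_of_mul_le_mul_left this hq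

theorem klK_shift {q : ℕ} [NeZero q] (a : ZMod q) (s l b : ℕ) :
    ‖∑ i ∈ Finset.range l, klK a ((s + i : ℕ) : ZMod q) - ∑ i ∈ Finset.range l, klK a ((s + b + i : ℕ) : ZMod q)‖ ≤ 2 * b := by
  induction b with
  | zero => simp
  | succ b ih =>
    have h : ∑ i ∈ Finset.range l, klK a ((s + (b + 1) + i : ℕ) : ZMod q) =
        ∑ i ∈ Finset.range l, klK a ((s + b + i : ℕ) : ZMod q) + klK a ((s + b + l : ℕ) : ZMod q)
          - klK a ((s + b : ℕ) : ZMod q) := by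
      have h1 := Finset.sum_range_succ (fun i => klK a ((s + b + i : ℕ) : ZMod q)) l
      have h2 := Finset.sum_range_succ' (fun i => klK a ((s + b + i : ℕ) : ZMod q)) l
      rw [h1] at h2
      rw [h2]
      simp only [add_zero, add_sub_cancel_right]
      refine Finset.sum_congr rfl fun i _ => ?_
      congr 2; ring
    rw [h]
    have e : ∀ x y z w : ℂ, x - (y + z - w) = (x - y) - z + w := by intros; ring
    rw [e]
    refine (norm_add_le _ _).trans ?_
    refine (add_le_add (norm_sub_le _ _) le_rfl).trans ?_
    have := klK_norm a ((s + b + l : ℕ) : ZMod q)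
    have := klK_norm a ((s + b : ℕ) : ZMod q)
    push_cast at *
    linarith

theorem klK_interval {q : ℕ} [NeZero q] (a : ZMod q) (S : ℝ)
    (hS : ∀ b, ‖klSum a b‖ ≤ S) (s l B : ℕ) (hl : l ≤ q) (hB : 1 ≤ B) (hBq : B ≤ q) :
    ‖∑ i ∈ Finset.range l, klK a ((s + i : ℕ) : ZMod q)‖ ≤ 2 * B + S * Real.sqrt (q / B) := by
  have hS0 : 0 ≤ S := (norm_nonneg _).trans (hS 0)
  have hB0 : (0 : ℝ) < B := by exact_mod_cast hB
  have hinj : ∀ (s l : ℕ), l ≤ q → Set.InjOn (fun i : ℕ => ((s + i : ℕ) : ZMod q)) (Finset.range l) := by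
    intro s l hl i hi j hj h
    simp only [Finset.coe_range, Set.mem_Iio] at hi hj
    simp only [Nat.cast_add, add_right_inj] at h
    rw [ZMod.natCast_eq_natCast_iff'] at h
    rwa [Nat.mod_eq_of_lt (by omega), Nat.mod_eq_of_lt (by omega)] at h
  have hbil := klK_bilinear a ((Finset.range l).image (fun i : ℕ => ((s + i : ℕ) : ZMod q)))
    ((Finset.range B).image (fun i : ℕ => ((0 + i : ℕ) : ZMod q))) S hS
  rw [Finset.card_image_of_injOn (hinj s l hl), Finset.card_image_of_injOn (hinj 0 B hBq),
    Finset.sum_image (hinj s l hl)] at hbil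
  simp_rw [Finset.sum_image (hinj 0 B hBq)] at hbil
  rw [Finset.sum_comm, Finset.card_range, Finset.card_range] at hbil
  set F := ∑ i ∈ Finset.range l, klK a ((s + i : ℕ) : ZMod q) with hF
  have h1 : ‖∑ b ∈ Finset.range B, (F - ∑ i ∈ Finset.range l, klK a ((s + b + i : ℕ) : ZMod q))‖ ≤ B * (2 * B) := by
    refine (norm_sum_le _ _).trans ?_
    calc _ ≤ ∑ b ∈ Finset.range B, (2 * B : ℝ) := by
          refine Finset.sum_le_sum fun b hb => (klK_shift a s l b).trans ?_
          have : b ≤ B := (Finset.mem_range.1 hb).le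
          have : (b : ℝ) ≤ B := by exact_mod_cast this
          linarith
      _ = _ := by simp
  have h2 : (B : ℂ) * F = ∑ b ∈ Finset.range B, (F - ∑ i ∈ Finset.range l, klK a ((s + b + i : ℕ) : ZMod q)) + ∑ b ∈ Finset.range B, ∑ i ∈ Finset.range l, klK a (((s + i : ℕ) : ZMod q) + ((0 + b : ℕ) : ZMod q)) := by
    rw [Finset.sum_sub_distrib]
    have : ∀ b i : ℕ, (((s + i : ℕ) : ZMod q) + ((0 + b : ℕ) : ZMod q)) = ((s + b + i : ℕ) : ZMod q) := by
      intro b i; push_cast; ring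
    simp_rw [this]
    simp
  have h3 : (B : ℝ) * ‖F‖ ≤ B * (2 * B) + S * √(l * B) := by
    have : (B : ℝ) * ‖F‖ = ‖(B : ℂ) * F‖ := by rw [norm_mul]; simp
    rw [this, h2]
    exact (norm_add_le _ _).trans (add_le_add h1 hbil)
  have h4 : √((l : ℝ) * B) ≤ B * √(q / B) := by
    rw [show (B : ℝ) * √(q / B) = √(q * B) by
      rw [show (q : ℝ) * B = B ^ 2 * (q / B) by field_simp, Real.sqrt_mul (by positivity), Real.sqrt_sq hB0.le]]
    gcongr
  have : (B : ℝ) * ‖F‖ ≤ B * (2 * B + S * √(q / B)) := by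
    refine h3.trans ?_
    have := mul_le_mul_of_nonneg_left h4 hS0
    linarith
  exact le_of_mul_le_mul_left this hB0


theorem div_bound (k : ℕ) : ∃ C : ℕ, 0 < C ∧ ∀ n : ℕ, 0 < n → n.divisors.card ^ k ≤ C * n := by
  obtain ⟨C0, hC0, hC⟩ : ∃ C0 : ℕ, 0 < C0 ∧ ∀ e : ℕ, (e + 1) ^ k ≤ C0 * 2 ^ e := by
    have h := tendsto_pow_const_div_const_pow_of_one_lt k (r := (2 : ℝ)) (by norm_num)
    obtain ⟨b, hb⟩ := h.bddAbove_range
    refine ⟨2 * (⌈b⌉₊ + 1), by positivity, fun e => ?_⟩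
    have h1 : (((e + 1 : ℕ) : ℝ) ^ k / 2 ^ (e + 1)) ≤ b := hb ⟨e + 1, rfl⟩
    rw [div_le_iff₀ (by positivity)] at h1
    have h2 : b ≤ (⌈b⌉₊ : ℝ) := Nat.le_ceil b
    have : (((e + 1) ^ k : ℕ) : ℝ) ≤ ((2 * (⌈b⌉₊ + 1) * 2 ^ e : ℕ) : ℝ) := by
      push_cast at h1 ⊢
      refine h1.trans ?_
      rw [pow_succ]
      have : (0 : ℝ) < 2 ^ e := by positivity
      nlinarith
    exact_mod_cast this
  refine ⟨C0 ^ (2 ^ k), by positivity, fun n hn => ?_⟩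
  rw [Nat.card_divisors hn.ne', ← Finset.prod_pow]
  have h1 : ∀ p ∈ n.primeFactors, (n.factorization p + 1) ^ k ≤
      (if p < 2 ^ k then C0 else 1) * p ^ n.factorization p := by
    intro p hp
    have hp2 : 2 ≤ p := (Nat.prime_of_mem_primeFactors hp).two_le
    split_ifs with h
    · exact (hC _).trans (Nat.mul_le_mul_left _ (Nat.pow_le_pow_left hp2 _))
    · rw [one_mul]
      calc (n.factorization p + 1) ^ k ≤ (2 ^ n.factorization p) ^ k :=
            Nat.pow_le_pow_left (Nat.lt_two_pow_self) k
        _ = (2 ^ k) ^ n.factorization p := by rw [← pow_mul, ← pow_mul, mul_comm]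
        _ ≤ _ := Nat.pow_le_pow_left (not_lt.1 h) _
  refine (Finset.prod_le_prod' h1).trans ?_
  rw [Finset.prod_mul_distrib]
  have h2 : ∏ p ∈ n.primeFactors, p ^ n.factorization p = n :=
    Nat.prod_factorization_pow_eq_self hn.ne'
  rw [h2]
  refine Nat.mul_le_mul_right _ ?_
  rw [← Finset.prod_filter, Finset.prod_const]
  refine Nat.pow_le_pow_right hC0 ?_
  calc _ ≤ (Finset.range (2 ^ k)).card := Finset.card_le_card (by
        intro p hp
        simp only [Finset.mem_filter] at hp
        exact Finset.mem_range.2 hp.2)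
    _ = _ := Finset.card_range _

/-- phases -/
noncomputable def klW (m q r : ℕ) : ℂ :=
  if Nat.Coprime r q then
    Complex.exp (2 * Real.pi * Complex.I * ((m : ℂ) * (((r : ZMod q)⁻¹).val : ℂ) / q)) else 0

theorem klW_eq (m q r : ℕ) [NeZero q] : klW m q r = klK (m : ZMod q) (r : ZMod q) := by
  unfold klW klK
  simp only [ZMod.isUnit_iff_coprime]
  split_ifs with h
  · have : (m : ZMod q) * (r : ZMod q)⁻¹ = (((m * ((r : ZMod q)⁻¹).val : ℕ) : ℤ) : ZMod q) := by
      push_cast; simp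
    rw [this, ZMod.stdAddChar_coe]
    push_cast
    congr 1; ring
  · rfl

theorem klW_norm (m q r : ℕ) [NeZero q] : ‖klW m q r‖ ≤ 1 := by
  rw [klW_eq]; exact klK_norm _ _

theorem bad_count (n m : ℕ) (hm : 0 < m) (G : ℝ) (hG : 0 < G) :
    (((Finset.Icc 1 n).filter (fun q : ℕ => G < (Nat.gcd m q : ℝ))).card : ℝ) ≤ m.divisors.card * (n / G) := by
  have h1 : ((Finset.Icc 1 n).filter (fun q : ℕ => G < (Nat.gcd m q : ℝ))) ⊆
      (m.divisors.filter (fun d : ℕ => G < (d : ℝ))).biUnion (fun d : ℕ => (Finset.Icc 1 n).filter (fun q : ℕ => d ∣ q)) := by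
    intro q hq
    simp only [Finset.mem_filter, Finset.mem_biUnion, Nat.mem_divisors] at hq ⊢
    exact ⟨Nat.gcd m q, ⟨⟨Nat.gcd_dvd_left _ _, hm.ne'⟩, hq.2⟩, hq.1, Nat.gcd_dvd_right _ _⟩
  have h2 := (Finset.card_le_card h1).trans Finset.card_biUnion_le
  calc _ ≤ ((∑ d ∈ m.divisors.filter (fun d : ℕ => G < (d : ℝ)), ((Finset.Icc 1 n).filter (fun q : ℕ => d ∣ q)).card : ℕ) : ℝ) := by
        exact_mod_cast h2
    _ ≤ ∑ d ∈ m.divisors.filter (fun d : ℕ => G < (d : ℝ)), (n / G : ℝ) := by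
        push_cast
        refine Finset.sum_le_sum fun d hd => ?_
        have hd2 := (Finset.mem_filter.1 hd).2
        have : ((Finset.Icc 1 n).filter (fun q : ℕ => d ∣ q)).card = n / d := by
          rw [← Nat.Ioc_filter_dvd_card_eq_div]
          rfl
        rw [this]
        refine Nat.cast_div_le.trans ?_
        gcongr
    _ ≤ _ := by
        rw [Finset.sum_const, nsmul_eq_mul]
        gcongr
        exact Finset.filter_subset _ _

theorem kl_single (n q m s l : ℕ) (hq : 0 < q) (hqn : q ≤ n) (hl : l ≤ q) (C η G : ℝ)
    (hη : 0 < η) (hη1 : η ≤ 1) (hC : ((q.divisors.card : ℝ)) ^ 8 ≤ C * q) (hgcd : (Nat.gcd m q : ℝ) ≤ G) :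
    ‖∑ i ∈ Finset.range l, klW m q (s + i)‖ ≤ 2 * (η * n + 1) +
      (2 * G * n ^ 3 * (C * n) ^ (3 / 8 : ℝ)) ^ (1 / 4 : ℝ) * Real.sqrt (1 / η) := by
  have : NeZero q := ⟨hq.ne'⟩
  have hq0 : (0 : ℝ) < q := by exact_mod_cast hq
  have hqn' : (q : ℝ) ≤ n := by exact_mod_cast hqn
  have hC0 : 0 ≤ C * q := le_trans (by positivity) hC
  have hC1 : 0 ≤ C := nonneg_of_mul_nonneg_left hC0 hq0
  have hG0 : 0 ≤ G := le_trans (by positivity) hgcd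
  simp_rw [klW_eq]
  have hτ : (q.divisors.card : ℝ) ^ 3 ≤ (C * n) ^ (3 / 8 : ℝ) := by
    have h1 : (q.divisors.card : ℝ) ^ 3 = ((q.divisors.card : ℝ) ^ 8) ^ (3 / 8 : ℝ) := by
      rw [← Real.rpow_natCast, ← Real.rpow_natCast, ← Real.rpow_mul (by positivity)]
      norm_num
    rw [h1]
    refine Real.rpow_le_rpow (by positivity) (hC.trans ?_) (by norm_num)
    gcongr
  have hS : ∀ b, ‖klSum (m : ZMod q) b‖ ≤ (2 * G * n ^ 3 * (C * n) ^ (3 / 8 : ℝ)) ^ (1 / 4 : ℝ) := by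
    intro b
    have h := kl_bound (m : ZMod q) b
    have hg : Nat.gcd (m : ZMod q).val q = Nat.gcd m q := by
      rw [ZMod.val_natCast]; exact (Nat.mod_modEq _ q).gcd_eq
    rw [hg] at h
    have h1 : ‖klSum (m : ZMod q) b‖ = (‖klSum (m : ZMod q) b‖ ^ 4) ^ (1 / 4 : ℝ) := by
      rw [← Real.rpow_natCast, ← Real.rpow_mul (by positivity)]
      norm_num
    rw [h1]
    refine Real.rpow_le_rpow (by positivity) (h.trans ?_) (by norm_num)
    have hg0 : (0 : ℝ) ≤ (Nat.gcd m q : ℝ) := Nat.cast_nonneg _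
    have ht0 : (0 : ℝ) ≤ (q.divisors.card : ℝ) ^ 3 := pow_nonneg (Nat.cast_nonneg _) 3
    generalize (Nat.gcd m q : ℝ) = g at *
    generalize (q.divisors.card : ℝ) ^ 3 = t at *
    gcongr
  have hB1 : 1 ≤ ⌈η * q⌉₊ := Nat.one_le_ceil_iff.2 (by positivity)
  have hB2 : ⌈η * q⌉₊ ≤ q := Nat.ceil_le.2 (by nlinarith)
  refine (klK_interval (m : ZMod q) _ hS s l ⌈η * q⌉₊ hl hB1 hB2).trans ?_
  have hB3 : (⌈η * q⌉₊ : ℝ) ≤ η * n + 1 := (Nat.ceil_lt_add_one (by positivity)).le.trans (by gcongr)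
  have hB4 : η * q ≤ (⌈η * q⌉₊ : ℝ) := Nat.le_ceil _
  have hB5 : (0 : ℝ) < ⌈η * q⌉₊ := by exact_mod_cast hB1
  have hB6 : (q : ℝ) / ⌈η * q⌉₊ ≤ 1 / η := by
    rw [div_le_div_iff₀ hB5 hη]
    linarith
  exact add_le_add (mul_le_mul_of_nonneg_left hB3 (by norm_num))
    (mul_le_mul_of_nonneg_left (Real.sqrt_le_sqrt hB6) ((norm_nonneg _).trans (hS 0)))

theorem kl_avg_explicit : ∃ C : ℝ, 0 < C ∧ ∀ (M n m : ℕ) (s l : ℕ → ℕ) (η : ℝ), 0 < η → η ≤ 1 → 0 < n → 0 < m →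
    m ≤ M * n ^ 2 → (∀ q, l q ≤ q) →
    ∑ q ∈ Finset.Icc 1 n, ‖∑ i ∈ Finset.range (l q), klW m q (s q + i)‖ ≤
      n * (2 * (η * n + 1) +
      (2 * (n : ℝ) ^ (1 / 2 : ℝ) * n ^ 3 * (C * n) ^ (3 / 8 : ℝ)) ^ (1 / 4 : ℝ) * Real.sqrt (1 / η))
      + n * ((C * (M * n ^ 2)) ^ (1 / 8 : ℝ) * (n / (n : ℝ) ^ (1 / 2 : ℝ))) := by
  obtain ⟨C, hC0, hC⟩ := div_bound 8
  refine ⟨C, by exact_mod_cast hC0, ?_⟩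
  intro M n m s l η hη hη1 hn hm hmM hl
  have hn0 : (0 : ℝ) < n := by exact_mod_cast hn
  set G : ℝ := (n : ℝ) ^ (1 / 2 : ℝ) with hG
  have hG0 : 0 < G := by positivity
  rw [← Finset.sum_filter_not_add_sum_filter _ (fun q => G < (Nat.gcd m q : ℝ))]
  refine add_le_add ?_ ?_
  · refine (Finset.sum_le_card_nsmul _ _ (2 * (η * n + 1) +
      (2 * G * n ^ 3 * (C * n) ^ (3 / 8 : ℝ)) ^ (1 / 4 : ℝ) * Real.sqrt (1 / η)) ?_).trans ?_
    · intro q hq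
      simp only [Finset.mem_filter, Finset.mem_Icc, not_lt] at hq
      refine kl_single n q m _ _ (by omega) hq.1.2 (hl q) C η G hη hη1 ?_ hq.2
      exact_mod_cast hC q (by omega)
    · rw [nsmul_eq_mul]
      gcongr
      refine (Finset.card_filter_le _ _).trans ?_
      simp
  · refine (Finset.sum_le_card_nsmul _ _ (n : ℝ) ?_).trans ?_
    · intro q hq
      simp only [Finset.mem_filter, Finset.mem_Icc] at hq
      have : NeZero q := ⟨by omega⟩
      refine (norm_sum_le _ _).trans ?_
      refine (Finset.sum_le_card_nsmul _ _ 1 (fun i _ => klW_norm _ _ _)).trans ?_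
      simp only [Finset.card_range, nsmul_eq_mul, mul_one]
      exact_mod_cast (hl q).trans hq.1.2
    · rw [nsmul_eq_mul, mul_comm]
      have hτ : (m.divisors.card : ℝ) ≤ (C * (M * n ^ 2)) ^ (1 / 8 : ℝ) := by
        have h1 : (m.divisors.card : ℝ) = ((m.divisors.card : ℝ) ^ 8) ^ (1 / 8 : ℝ) := by
          rw [← Real.rpow_natCast, ← Real.rpow_mul (by positivity)]
          norm_num
        rw [h1]
        refine Real.rpow_le_rpow (by positivity) ?_ (by norm_num)
        exact_mod_cast (hC m hm).trans (Nat.mul_le_mul_left _ hmM)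
      refine mul_le_mul_of_nonneg_left ((bad_count n m hm G hG0).trans ?_) hn0.le
      gcongr

theorem kl_avg (M : ℕ) (ε : ℝ) (hε : 0 < ε) : ∃ n0 : ℕ, ∀ n ≥ n0, ∀ m : ℕ, 0 < m → m ≤ M * n ^ 2 →
    ∀ s l : ℕ → ℕ, (∀ q, l q ≤ q) →
    ∑ q ∈ Finset.Icc 1 n, ‖∑ i ∈ Finset.range (l q), klW m q (s q + i)‖ ≤ ε * n ^ 2 := by
  obtain ⟨C, hC, h⟩ := kl_avg_explicit
  set η := min 1 (ε / 8) with hη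
  have hη0 : 0 < η := by positivity
  have hη1 : η ≤ 1 := min_le_left _ _
  have hη2 : η ≤ ε / 8 := min_le_right _ _
  have ht : Tendsto (fun n : ℕ => 2 * η + 2 * (n : ℝ) ^ (-1 : ℝ) + (2 * C ^ (3 / 8 : ℝ)) ^ (1 / 4 : ℝ) * Real.sqrt (1 / η) * (n : ℝ) ^ (-(1 / 32) : ℝ)
      + (C * M) ^ (1 / 8 : ℝ) * (n : ℝ) ^ (-(1 / 4) : ℝ)) atTop (nhds (2 * η + 2 * 0 + (2 * C ^ (3 / 8 : ℝ)) ^ (1 / 4 : ℝ) * Real.sqrt (1 / η) * 0 + (C * M) ^ (1 / 8 : ℝ) * 0)) := by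
    have hz : ∀ a : ℝ, 0 < a → Tendsto (fun n : ℕ => (n : ℝ) ^ (-a)) atTop (nhds 0) := fun a ha =>
      (tendsto_rpow_neg_atTop ha).comp tendsto_natCast_atTop_atTop
    refine ((tendsto_const_nhds.add ((hz 1 (by norm_num)).const_mul _)).add ((hz (1/32) (by norm_num)).const_mul _)).add ((hz (1/4) (by norm_num)).const_mul _)
  have hlt : 2 * η + 2 * 0 + (2 * C ^ (3 / 8 : ℝ)) ^ (1 / 4 : ℝ) * Real.sqrt (1 / η) * 0 + (C * M) ^ (1 / 8 : ℝ) * 0 < ε := by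
    nlinarith
  obtain ⟨n0, hn0⟩ := eventually_atTop.1 (ht.eventually (gt_mem_nhds hlt))
  refine ⟨max n0 1, fun n hn m hm hmM s l hl => ?_⟩
  have hnpos : 0 < n := by have := le_max_right n0 1; omega
  have hn' : (0 : ℝ) < n := by exact_mod_cast hnpos
  refine (h M n m s l η hη0 hη1 hnpos hm hmM hl).trans ?_
  have h2 := (hn0 n ((le_max_left _ _).trans hn)).le
  have h3 := mul_le_mul_of_nonneg_right h2 (sq_nonneg (n : ℝ))
  refine le_trans (le_of_eq ?_) h3
  have e1 : (2 * (n : ℝ) ^ (1 / 2 : ℝ) * n ^ 3 * (C * n) ^ (3 / 8 : ℝ)) ^ (1 / 4 : ℝ)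
      = (2 * C ^ (3 / 8 : ℝ)) ^ (1 / 4 : ℝ) * (n : ℝ) ^ (31 / 32 : ℝ) := by
    rw [Real.mul_rpow hC.le hn'.le, ← Real.rpow_natCast (n : ℝ) 3,
      show 2 * (n : ℝ) ^ (1 / 2 : ℝ) * (n : ℝ) ^ ((3 : ℕ) : ℝ) * (C ^ (3 / 8 : ℝ) * (n : ℝ) ^ (3 / 8 : ℝ))
        = (2 * C ^ (3 / 8 : ℝ)) * ((n : ℝ) ^ (1 / 2 : ℝ) * (n : ℝ) ^ ((3 : ℕ) : ℝ) * (n : ℝ) ^ (3 / 8 : ℝ)) by ring,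
      ← Real.rpow_add hn', ← Real.rpow_add hn', Real.mul_rpow (by positivity) (by positivity), ← Real.rpow_mul hn'.le]
    norm_num
  have e2 : (C * (M * n ^ 2)) ^ (1 / 8 : ℝ) = (C * M) ^ (1 / 8 : ℝ) * (n : ℝ) ^ (1 / 4 : ℝ) := by
    rw [← mul_assoc, Real.mul_rpow (by positivity) (by positivity), ← Real.rpow_natCast (n : ℝ) 2, ← Real.rpow_mul hn'.le]
    norm_num
  have e3 : (n : ℝ) ^ (31 / 32 : ℝ) = (n : ℝ) ^ (-(1 / 32) : ℝ) * n := by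
    rw [← Real.rpow_add_one hn'.ne']; norm_num
  have e4 : (n : ℝ) ^ (1 / 4 : ℝ) * (n / (n : ℝ) ^ (1 / 2 : ℝ)) = (n : ℝ) ^ (-(1 / 4) : ℝ) * n := by
    rw [show (n : ℝ) ^ (1 / 4 : ℝ) * (n / (n : ℝ) ^ (1 / 2 : ℝ)) = ((n : ℝ) ^ (1 / 4 : ℝ) / (n : ℝ) ^ (1 / 2 : ℝ)) * n by ring,
      ← Real.rpow_sub hn']; norm_num
  rw [e1, e2, e3, mul_assoc ((C * M) ^ (1 / 8 : ℝ)), e4, Real.rpow_neg_one]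
  field_simp


noncomputable def sawP (y : ℝ) : ℝ := -(Int.fract y ^ 2 - Int.fract y + 1 / 6) / 2

theorem sawP_hasSum (y : ℝ) :
    HasSum (fun n : ℕ => 1 / (n : ℝ) ^ 2 * Real.cos (2 * Real.pi * n * y)) (-(2 * Real.pi ^ 2) * sawP y) := by
  have h := hasSum_one_div_nat_pow_mul_cos (k := 1) one_ne_zero (x := Int.fract y)
    ⟨Int.fract_nonneg y, (Int.fract_lt_one y).le⟩
  have hc : ∀ n : ℕ, Real.cos (2 * Real.pi * n * Int.fract y) = Real.cos (2 * Real.pi * n * y) := by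
    intro n
    have : 2 * Real.pi * n * Int.fract y = 2 * Real.pi * n * y - ((n * ⌊y⌋ : ℤ) : ℝ) * (2 * Real.pi) := by
      rw [Int.fract]; push_cast; ring
    rw [this, Real.cos_sub_int_mul_two_pi]
  simp_rw [hc] at h
  have hB : Polynomial.bernoulli 2 = Polynomial.X ^ 2 - Polynomial.X + Polynomial.C (1 / 6 : ℚ) := by
    simp [Polynomial.bernoulli, Finset.sum_range_succ, bernoulli_one, bernoulli_two, ← Polynomial.C_mul_X_pow_eq_monomial]
    have h2 : Polynomial.C (1 / 2 : ℚ) * 2 = 1 := by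
      rw [show (2 : Polynomial ℚ) = Polynomial.C 2 from rfl, ← Polynomial.C_mul]
      norm_num
    norm_num
    linear_combination (-Polynomial.X) * h2
  convert h using 1
  rw [show 2 * 1 = 2 from rfl, hB, sawP]
  simp
  ring

theorem saw_upper (y τ : ℝ) (h0 : 0 < τ) (h1 : τ < 1) :
    τ * (1 / 2 - Int.fract y) ≤ τ ^ 2 / 2 + (sawP (y + τ) - sawP y) := by
  unfold sawP
  have f0 := Int.fract_nonneg y
  have f1 := Int.fract_lt_one y
  by_cases h : Int.fract y + τ < 1
  · have : Int.fract (y + τ) = Int.fract y + τ := by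
      rw [Int.fract_eq_iff]
      refine ⟨by linarith, h, ⌊y⌋, ?_⟩
      rw [Int.fract]; ring
    rw [this]; nlinarith
  · have : Int.fract (y + τ) = Int.fract y + τ - 1 := by
      rw [Int.fract_eq_iff]
      refine ⟨by linarith, by linarith, ⌊y⌋ + 1, ?_⟩
      rw [Int.fract]; push_cast; ring
    rw [this]; nlinarith

theorem saw_lower (y τ : ℝ) (h0 : 0 < τ) (h1 : τ < 1) :
    - (τ ^ 2 / 2 + (sawP (y - τ) - sawP y)) ≤ τ * (1 / 2 - Int.fract y) := by
  unfold sawP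
  have f0 := Int.fract_nonneg y
  have f1 := Int.fract_lt_one y
  by_cases h : 0 ≤ Int.fract y - τ
  · have : Int.fract (y - τ) = Int.fract y - τ := by
      rw [Int.fract_eq_iff]
      refine ⟨h, by linarith, ⌊y⌋, ?_⟩
      rw [Int.fract]; ring
    rw [this]; nlinarith
  · have : Int.fract (y - τ) = Int.fract y - τ + 1 := by
      rw [Int.fract_eq_iff]
      refine ⟨by linarith, by linarith, ⌊y⌋ - 1, ?_⟩
      rw [Int.fract]; push_cast; ring
    rw [this]; nlinarith

theorem sawP_sum (ε : ℝ) (hε : 0 < ε) (hε1 : ε ≤ 1) : ∃ H : ℕ, ∀ {ι : Type} (s : Finset ι) (y : ι → ℝ) (M : ℝ),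
    (s.card : ℝ) ≤ M →
    (∀ h : ℕ, 1 ≤ h → h ≤ H → ‖∑ i ∈ s, Complex.exp (2 * Real.pi * Complex.I * (h * y i : ℝ))‖ ≤ ε * M) →
    ∀ θ : ℝ, |∑ i ∈ s, sawP (y i + θ)| ≤ ε * M := by
  have hz := hasSum_zeta_two
  obtain ⟨H, hH⟩ := (hz.tendsto_sum_nat.eventually (lt_mem_nhds (show Real.pi ^ 2 / 6 - ε < _ by linarith))).exists
  refine ⟨H, fun {ι} s y M hM hW θ => ?_⟩
  have hM0 : 0 ≤ M := (Nat.cast_nonneg _).trans hM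
  have h1 : HasSum (fun n : ℕ => ∑ i ∈ s, 1 / (n : ℝ) ^ 2 * Real.cos (2 * Real.pi * n * (y i + θ)))
      (∑ i ∈ s, -(2 * Real.pi ^ 2) * sawP (y i + θ)) := hasSum_sum fun i _ => sawP_hasSum _
  set b : ℕ → ℝ := fun n => M * (1 / (n : ℝ) ^ 2 - (1 - ε) * (if n ∈ Finset.range H then 1 / (n : ℝ) ^ 2 else 0)) with hb
  have hbs : HasSum b (M * (Real.pi ^ 2 / 6 - (1 - ε) * ∑ n ∈ Finset.range H, 1 / (n : ℝ) ^ 2)) := by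
    refine (hz.sub (HasSum.mul_left _ ?_)).mul_left M
    have := hasSum_sum_of_ne_finset_zero (L := SummationFilter.unconditional ℕ) (f := fun n : ℕ => if n ∈ Finset.range H then 1 / (n : ℝ) ^ 2 else 0) (s := Finset.range H) (by
      intro n hn; exact if_neg hn)
    rwa [Finset.sum_congr rfl (g := fun n : ℕ => 1 / (n : ℝ) ^ 2) (fun n hn => if_pos hn)] at this
  have hle : ∀ n : ℕ, ‖∑ i ∈ s, 1 / (n : ℝ) ^ 2 * Real.cos (2 * Real.pi * n * (y i + θ))‖ ≤ b n := by
    intro n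
    rcases Nat.eq_zero_or_pos n with rfl | hn
    · simp [hb]
    have e1 : ∑ i ∈ s, Real.cos (2 * Real.pi * n * (y i + θ)) =
        (Complex.exp (2 * Real.pi * Complex.I * (n * θ : ℝ)) * ∑ i ∈ s, Complex.exp (2 * Real.pi * Complex.I * (n * y i : ℝ))).re := by
      rw [Finset.mul_sum, Complex.re_sum]
      refine Finset.sum_congr rfl fun i _ => ?_
      rw [← Complex.exp_add, ← Complex.exp_ofReal_mul_I_re]
      congr 2
      push_cast; ring
    have hu : ‖Complex.exp (2 * Real.pi * Complex.I * (n * θ : ℝ))‖ = 1 := by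
      rw [show (2 * Real.pi * Complex.I * (n * θ : ℝ) : ℂ) = ((2 * Real.pi * (n * θ) : ℝ) : ℂ) * Complex.I by push_cast; ring]
      exact Complex.norm_exp_ofReal_mul_I _
    rw [← Finset.mul_sum, norm_mul, e1]
    have e2 : ‖(Complex.exp (2 * Real.pi * Complex.I * (n * θ : ℝ)) * ∑ i ∈ s, Complex.exp (2 * Real.pi * Complex.I * (n * y i : ℝ))).re‖ ≤ ‖∑ i ∈ s, Complex.exp (2 * Real.pi * Complex.I * (n * y i : ℝ))‖ := by
      refine (Complex.abs_re_le_norm _).trans ?_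
      rw [norm_mul, hu, one_mul]
    have e3 : ‖(1 / (n : ℝ) ^ 2)‖ = 1 / (n : ℝ) ^ 2 := Real.norm_of_nonneg (by positivity)
    rw [e3]
    by_cases hnH : n ∈ Finset.range H
    · have := hW n hn (Finset.mem_range.1 hnH).le
      simp only [hb, if_pos hnH]
      calc _ ≤ 1 / (n : ℝ) ^ 2 * (ε * M) := by gcongr; exact e2.trans this
        _ = _ := by ring
    · simp only [hb, if_neg hnH]
      have : ‖∑ i ∈ s, Complex.exp (2 * Real.pi * Complex.I * (n * y i : ℝ))‖ ≤ M := by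
        refine (norm_sum_le _ _).trans (le_trans (le_of_eq ?_) hM)
        rw [Finset.sum_congr rfl (g := fun _ => (1 : ℝ))]
        · simp
        · intro i _
          rw [show (2 * Real.pi * Complex.I * (n * y i : ℝ) : ℂ) = ((2 * Real.pi * (n * y i) : ℝ) : ℂ) * Complex.I by push_cast; ring]
          exact Complex.norm_exp_ofReal_mul_I _
      calc _ ≤ 1 / (n : ℝ) ^ 2 * M := by gcongr; exact e2.trans this
        _ = _ := by ring
  have h2 := tsum_of_norm_bounded hbs hle
  rw [h1.tsum_eq, ← Finset.mul_sum, norm_mul, Real.norm_eq_abs, Real.norm_eq_abs, abs_neg, abs_of_nonneg (by positivity)] at h2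
  have hpi : 3 < Real.pi := Real.pi_gt_three
  have hpi4 : Real.pi ≤ 4 := Real.pi_le_four
  have h3 : M * (Real.pi ^ 2 / 6 - (1 - ε) * ∑ n ∈ Finset.range H, 1 / (n : ℝ) ^ 2) ≤ M * (ε * 4) := by
    refine mul_le_mul_of_nonneg_left ?_ hM0
    have g1 := mul_le_mul_of_nonneg_left hH.le (sub_nonneg.2 hε1)
    have g2 : Real.pi ^ 2 ≤ 16 := by nlinarith
    have g3 := mul_nonneg hε.le (sub_nonneg.2 g2)
    nlinarith
  have h4 : 0 ≤ |∑ i ∈ s, sawP (y i + θ)| := abs_nonneg _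
  have h5 : 0 ≤ ε * M := by positivity
  have g4 := mul_le_mul_of_nonneg_right (show (9 : ℝ) ≤ Real.pi ^ 2 by nlinarith) h4
  nlinarith

theorem weyl_saw (ε : ℝ) (hε : 0 < ε) : ∃ H : ℕ, ∃ ε' : ℝ, 0 < ε' ∧
    ∀ {ι : Type} (s : Finset ι) (y : ι → ℝ) (M : ℝ), (s.card : ℝ) ≤ M →
    (∀ h : ℕ, 1 ≤ h → h ≤ H → ‖∑ i ∈ s, Complex.exp (2 * Real.pi * Complex.I * (h * y i : ℝ))‖ ≤ ε' * M) →
    ∀ θ : ℝ, |∑ i ∈ s, (1 / 2 - Int.fract (y i + θ))| ≤ ε * M := by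
  set τ := min (1 / 2) ε with hτ
  have hτ0 : 0 < τ := by positivity
  have hτ1 : τ < 1 := (min_le_left _ _).trans_lt (by norm_num)
  have hτ2 : τ ≤ ε := min_le_right _ _
  have hε' : 0 < τ * ε / 4 := by positivity
  set ε' := min 1 (τ * ε / 4) with hε'd
  have hp : 0 < ε' := by positivity
  have hple : ε' ≤ τ * ε / 4 := min_le_right _ _
  obtain ⟨H, hH⟩ := sawP_sum ε' hp (min_le_left _ _)
  refine ⟨H, ε', hp, fun {ι} s y M hM hW θ => ?_⟩
  have hM0 : 0 ≤ M := (Nat.cast_nonneg _).trans hM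
  have A1 := hH s y M hM hW (θ + τ)
  have A2 := hH s y M hM hW θ
  have A3 := hH s y M hM hW (θ - τ)
  have U : τ * ∑ i ∈ s, (1 / 2 - Int.fract (y i + θ)) ≤ s.card * (τ ^ 2 / 2) + (∑ i ∈ s, sawP (y i + (θ + τ)) - ∑ i ∈ s, sawP (y i + θ)) := by
    rw [Finset.mul_sum, ← Finset.sum_sub_distrib, ← nsmul_eq_mul, ← Finset.sum_const, ← Finset.sum_add_distrib]
    refine Finset.sum_le_sum fun i _ => ?_
    rw [← add_assoc]
    exact saw_upper _ _ hτ0 hτ1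
  have Lo : -(s.card * (τ ^ 2 / 2) + (∑ i ∈ s, sawP (y i + (θ - τ)) - ∑ i ∈ s, sawP (y i + θ))) ≤ τ * ∑ i ∈ s, (1 / 2 - Int.fract (y i + θ)) := by
    rw [Finset.mul_sum, ← Finset.sum_sub_distrib, ← nsmul_eq_mul, ← Finset.sum_const, ← Finset.sum_add_distrib, ← Finset.sum_neg_distrib]
    refine Finset.sum_le_sum fun i _ => ?_
    rw [show y i + (θ - τ) = y i + θ - τ by ring]
    exact saw_lower _ _ hτ0 hτ1
  rw [abs_le] at A1 A2 A3
  have c1 : s.card * (τ ^ 2 / 2) ≤ M * (τ ^ 2 / 2) := by gcongr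
  have c2 : ε' * M ≤ τ * ε / 4 * M := by gcongr
  have c3 : M * (τ ^ 2 / 2) ≤ τ * (ε * M) / 2 := by
    have := mul_le_mul_of_nonneg_left hτ2 (mul_nonneg hM0 hτ0.le)
    nlinarith
  rw [abs_le]
  constructor
  · have : τ * (-(ε * M)) ≤ τ * ∑ i ∈ s, (1 / 2 - Int.fract (y i + θ)) := by
      refine le_trans ?_ Lo
      linarith [A2.1, A2.2, A3.1, A3.2]
    exact le_of_mul_le_mul_left this hτ0
  · have : τ * ∑ i ∈ s, (1 / 2 - Int.fract (y i + θ)) ≤ τ * (ε * M) := by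
      refine U.trans ?_
      linarith [A2.1, A2.2, A1.1, A1.2]
    exact le_of_mul_le_mul_left this hτ0

/-- pairs of consecutive Farey denominators with gap at least `δ` -/
noncomputable def fpairs (n : ℕ) (δ : ℝ) : Finset (ℕ × ℕ) :=
  ((Finset.Icc 1 n) ×ˢ (Finset.Icc 1 n)).filter
    (fun p => n < p.1 + p.2 ∧ Nat.Coprime p.2 p.1 ∧ (p.1 : ℝ) * p.2 * δ ≤ 1)

theorem fpairs_card (n : ℕ) (δ : ℝ) : ((fpairs n δ).card : ℝ) ≤ (n : ℝ) ^ 2 := by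
  have : (fpairs n δ).card ≤ n ^ 2 := by
    refine (Finset.card_filter_le _ _).trans ?_
    simp [pow_two]
  exact_mod_cast this

theorem saw_bound (C : ℕ) (ε : ℝ) (hε : 0 < ε) : ∃ n0 : ℕ, ∀ n ≥ n0, ∀ N : ℕ, 0 < N → N ≤ C * n ^ 2 →
    ∀ δ > 0, ∀ θ : ℝ, |∑ p ∈ fpairs n δ, (1 / 2 - Int.fract ((N : ℝ) * ((p.2 : ZMod p.1)⁻¹).val / p.1 + θ))| ≤ ε * n ^ 2 := by
  obtain ⟨H, ε', hε', hw⟩ := weyl_saw ε hε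
  obtain ⟨n0, hn0⟩ := kl_avg (H * C) ε' hε'
  refine ⟨n0, fun n hn N hN hNC δ hδ θ => ?_⟩
  refine hw (fpairs n δ) (fun p => (N : ℝ) * ((p.2 : ZMod p.1)⁻¹).val / p.1) _ (fpairs_card n δ) ?_ θ
  intro h h1 hH
  have hk := hn0 n hn (h * N) (by positivity) (by
    calc h * N ≤ H * (C * n ^ 2) := Nat.mul_le_mul hH hNC
      _ = _ := by ring) (fun q => n - q + 1) (fun q => min n ⌊1 / (δ * q)⌋₊ - (n - q)) (fun q => by
        have := min_le_left n ⌊1 / (δ * q)⌋₊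
        omega)
  refine le_trans ?_ hk
  have e : ∑ p ∈ fpairs n δ, Complex.exp (2 * Real.pi * Complex.I * (h * ((N : ℝ) * ((p.2 : ZMod p.1)⁻¹).val / p.1) : ℝ))
      = ∑ q ∈ Finset.Icc 1 n, ∑ i ∈ Finset.range (min n ⌊1 / (δ * q)⌋₊ - (n - q)), klW (h * N) q (n - q + 1 + i) := by
    rw [fpairs, Finset.sum_filter, Finset.sum_product]
    refine Finset.sum_congr rfl fun q hq => ?_
    rw [Finset.mem_Icc] at hq
    have hq0 : (0 : ℝ) < q := by exact_mod_cast (by omega : 0 < q)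
    have hI : min n ⌊1 / (δ * q)⌋₊ - (n - q) = (min n ⌊1 / (δ * q)⌋₊ + 1) - (n - q + 1) := by omega
    rw [hI, ← Finset.sum_Ico_eq_sum_range (fun r => klW (h * N) q r)]
    unfold klW
    rw [← Finset.sum_filter, ← Finset.sum_filter]
    refine Finset.sum_congr ?_ ?_
    · ext r
      simp only [Finset.mem_filter, Finset.mem_Icc, Finset.mem_Ico, Nat.lt_succ_iff, le_min_iff]
      have hF : (q : ℝ) * r * δ ≤ 1 ↔ r ≤ ⌊1 / (δ * q)⌋₊ := by
        rw [Nat.le_floor_iff (by positivity), le_div_iff₀ (by positivity)]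
        constructor <;> intro h <;> linarith
      rw [hF]
      constructor
      · rintro ⟨⟨a, b⟩, c, d, e⟩
        exact ⟨⟨by omega, b, e⟩, d⟩
      · rintro ⟨⟨a, b, e⟩, d⟩
        exact ⟨⟨by omega, b⟩, by omega, d, e⟩
    · intro r _
      congr 1
      push_cast
      ring
  rw [e]
  exact norm_sum_le _ _


/-- adjacent fractions of level `n` -/
def FGap (n : ℕ) (a : ℤ) (q : ℕ) (a' : ℤ) (q' : ℕ) : Prop :=
  1 ≤ q ∧ q ≤ n ∧ 1 ≤ q' ∧ q' ≤ n ∧ n < q + q' ∧ a' * q - a * q' = 1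

theorem fgap_exists (x : ℝ) (n : ℕ) (hn : 1 ≤ n) : ∃ a q a' q', FGap n a q a' q' ∧
    (a : ℝ) ≤ x * q ∧ x * q' < a' := by
  induction n, hn using Nat.le_induction with
  | base =>
    refine ⟨⌊x⌋, 1, ⌊x⌋ + 1, 1, ⟨le_rfl, le_rfl, le_rfl, le_rfl, by norm_num, by push_cast; ring⟩, ?_, ?_⟩
    · simpa using Int.floor_le x
    · simpa using Int.lt_floor_add_one x
  | succ n hn ih =>
    obtain ⟨a, q, a', q', ⟨h1, h2, h3, h4, h5, h6⟩, h7, h8⟩ := ih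
    by_cases hs : n + 1 < q + q'
    · exact ⟨a, q, a', q', ⟨h1, by omega, h3, by omega, hs, h6⟩, h7, h8⟩
    · by_cases hx : x * (q + q') < a + a'
      · refine ⟨a, q, a + a', q + q', ⟨h1, by omega, by omega, by omega, by omega, ?_⟩, h7, ?_⟩
        · push_cast; linear_combination h6
        · push_cast; exact hx
      · refine ⟨a + a', q + q', a', q', ⟨by omega, by omega, by omega, by omega, by omega, ?_⟩, ?_, h8⟩
        · push_cast; linear_combination h6
        · push_cast; linarith

theorem fgap_between {n : ℕ} {a : ℤ} {q : ℕ} {a' : ℤ} {q' : ℕ} (h : FGap n a q a' q') (p : ℤ) (r : ℕ)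
    (h1 : a * r < p * q) (h2 : p * q' < a' * r) : n < r := by
  obtain ⟨g1, g2, g3, g4, g5, g6⟩ := h
  have e : (r : ℤ) = q * (a' * r - p * q') + q' * (p * q - a * r) := by
    linear_combination (-(r : ℤ)) * g6
  have e1 : (q : ℤ) * 1 ≤ q * (a' * r - p * q') := by
    apply mul_le_mul_of_nonneg_left _ (by positivity); omega
  have e2 : (q' : ℤ) * 1 ≤ q' * (p * q - a * r) := by
    apply mul_le_mul_of_nonneg_left _ (by positivity); omega
  omega

theorem fgap_between_real {n : ℕ} {a : ℤ} {q : ℕ} {a' : ℤ} {q' : ℕ} (h : FGap n a q a' q') (p : ℤ) (r : ℕ)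
    (hr : 1 ≤ r) (hrn : r ≤ n) (h1 : (a : ℝ) / q < p / r) (h2 : (p : ℝ) / r < a' / q') : False := by
  have hq : (0 : ℝ) < q := by exact_mod_cast h.1
  have hq' : (0 : ℝ) < q' := by exact_mod_cast h.2.2.1
  have hr' : (0 : ℝ) < r := by exact_mod_cast hr
  rw [div_lt_div_iff₀ hq hr'] at h1
  rw [div_lt_div_iff₀ hr' hq'] at h2
  have := fgap_between h p r (by exact_mod_cast h1) (by exact_mod_cast h2)
  omega

theorem frac_unique {a q a' q' b r b' r' : ℤ} (hq : 0 < q) (hr : 0 < r) (h : a' * q - a * q' = 1)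
    (h2 : b' * r - b * r' = 1) (e : a * r = b * q) : q = r ∧ a = b := by
  have d1 : q ∣ r := ⟨a' * r - b * q', by linear_combination (-r) * h - q' * e⟩
  have d2 : r ∣ q := ⟨b' * q - a * r', by linear_combination (-q) * h2 + r' * e⟩
  have : q = r := Int.dvd_antisymm hq.le hr.le d1 d2
  subst this
  exact ⟨rfl, mul_right_cancel₀ hq.ne' e⟩

theorem fgap_unique {n : ℕ} {a : ℤ} {q : ℕ} {a' : ℤ} {q' : ℕ} (h : FGap n a q a' q')
    {b : ℤ} {r : ℕ} {b' : ℤ} {r' : ℕ} (k : FGap n b r b' r') (x : ℝ)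
    (h1 : (a : ℝ) / q < x) (h2 : x < a' / q') (k1 : (b : ℝ) / r < x) (k2 : x < b' / r') :
    q = r ∧ a = b ∧ q' = r' ∧ a' = b' := by
  have hq : (0 : ℝ) < q := by exact_mod_cast h.1
  have hq' : (0 : ℝ) < q' := by exact_mod_cast h.2.2.1
  have hr : (0 : ℝ) < r := by exact_mod_cast k.1
  have hr' : (0 : ℝ) < r' := by exact_mod_cast k.2.2.1
  have E1 : (a : ℝ) / q = b / r := by
    refine le_antisymm ?_ ?_
    · by_contra hc; push Not at hc
      exact fgap_between_real k a q h.1 h.2.1 hc (h1.trans k2)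
    · by_contra hc; push Not at hc
      exact fgap_between_real h b r k.1 k.2.1 hc (k1.trans h2)
  have E2 : (a' : ℝ) / q' = b' / r' := by
    refine le_antisymm ?_ ?_
    · by_contra hc; push Not at hc
      exact fgap_between_real h b' r' k.2.2.1 k.2.2.2.1 (h1.trans k2) hc
    · by_contra hc; push Not at hc
      exact fgap_between_real k a' q' h.2.2.1 h.2.2.2.1 (k1.trans h2) hc
  rw [div_eq_div_iff hq.ne' hr.ne'] at E1
  rw [div_eq_div_iff hq'.ne' hr'.ne'] at E2
  have F1 := frac_unique (a := a) (q := q) (a' := a') (q' := q') (b := b) (r := r) (b' := b') (r' := r')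
    (by exact_mod_cast h.1) (by exact_mod_cast k.1) h.2.2.2.2.2 k.2.2.2.2.2 (by exact_mod_cast E1)
  have F2 := frac_unique (a := -a') (q := q') (a' := -a) (q' := q) (b := -b') (r := r') (b' := -b) (r' := r)
    (by exact_mod_cast h.2.2.1) (by exact_mod_cast k.2.2.1) (by linear_combination h.2.2.2.2.2)
    (by linear_combination k.2.2.2.2.2) (by 
      have : a' * (r' : ℤ) = b' * q' := by exact_mod_cast E2
      linear_combination -this)
  exact ⟨by exact_mod_cast F1.1, F1.2, by exact_mod_cast F2.1, by simpa using F2.2⟩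

/-- no fraction of denominator at most `n` within `δ/2` of `x` -/
def FFree (n : ℕ) (δ x : ℝ) : Prop :=
  ∀ (r : ℕ) (p : ℤ), 1 ≤ r → r ≤ n → ¬ (x - δ / 2 < (p : ℝ) / r ∧ (p : ℝ) / r < x + δ / 2)

theorem ffree_of_gap {n : ℕ} {a : ℤ} {q : ℕ} {a' : ℤ} {q' : ℕ} (h : FGap n a q a' q') {δ x : ℝ}
    (h1 : (a : ℝ) / q ≤ x - δ / 2) (h2 : x + δ / 2 ≤ a' / q') : FFree n δ x := fun r p hr hrn hh =>
  fgap_between_real h p r hr hrn (h1.trans_lt hh.1) (hh.2.trans_le h2)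

theorem gap_of_ffree {n : ℕ} (hn : 1 ≤ n) {δ x : ℝ} (hδ : 0 < δ) (hf : FFree n δ x) : ∃ a q a' q', FGap n a q a' q' ∧
    (a : ℝ) / q ≤ x - δ / 2 ∧ x + δ / 2 ≤ (a' : ℝ) / q' := by
  obtain ⟨a, q, a', q', h, h1, h2⟩ := fgap_exists x n hn
  have hq : (0 : ℝ) < q := by exact_mod_cast h.1
  have hq' : (0 : ℝ) < q' := by exact_mod_cast h.2.2.1
  rw [← div_le_iff₀ hq] at h1
  rw [← lt_div_iff₀ hq'] at h2
  refine ⟨a, q, a', q', h, ?_, ?_⟩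
  · by_contra hc; push Not at hc
    exact hf q a h.1 h.2.1 ⟨hc, by linarith⟩
  · by_contra hc; push Not at hc
    exact hf q' a' h.2.2.1 h.2.2.2.1 ⟨by linarith, hc⟩

/-- base numerators -/
noncomputable def baseR (q q' : ℕ) : ℤ := (((q : ZMod q')⁻¹).val : ℤ)
noncomputable def baseL (q q' : ℕ) : ℤ := (baseR q q' * q - 1) / q'

theorem baseR_dvd (q q' : ℕ) (hc : Nat.Coprime q q') : (q' : ℤ) ∣ baseR q q' * q - 1 := by
  rcases Nat.eq_zero_or_pos q' with rfl | hq'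
  · simp at hc; subst hc
    simp [baseR]
  have : NeZero q' := ⟨hq'.ne'⟩
  rw [← ZMod.intCast_zmod_eq_zero_iff_dvd]
  push_cast
  rw [baseR]
  push_cast
  rw [ZMod.natCast_val, ZMod.cast_id', id_eq, ZMod.inv_mul_of_unit, sub_self]
  exact (ZMod.isUnit_iff_coprime q q').2 hc

theorem base_eq (q q' : ℕ) (hc : Nat.Coprime q q') : baseR q q' * q - baseL q q' * q' = 1 := by
  have := Int.ediv_mul_cancel (baseR_dvd q q' hc)
  rw [baseL, this]; ring

theorem base_shift {q q' : ℕ} (hq : 1 ≤ q) (hq' : 1 ≤ q') {a a' b b' : ℤ} (h1 : a' * q - a * q' = 1) (h2 : b' * q - b * q' = 1) :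
    ∃ k : ℤ, a = b + k * q ∧ a' = b' + k * q' := by
  have e : (a' - b') * q = (a - b) * q' := by linear_combination h1 - h2
  refine ⟨b * (b' - a') - b' * (b - a), ?_, ?_⟩
  · linear_combination b * e + (b - a) * h2
  · linear_combination b' * e + (b' - a') * h2

theorem mem_shift {n : ℕ} {δ x₀ : ℝ} {N : ℕ} (hN : 0 < N) {p : ℕ × ℕ} (hp : p ∈ fpairs n δ) (i k : ℤ) (y : ℝ)
    (hy : y = x₀ + (i - k * N) / N) :
    FGap n (baseL p.1 p.2 - k * p.1) p.1 (baseR p.1 p.2 - k * p.2) p.2 ∧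
    (i ∈ Finset.Icc ⌈(N : ℝ) * ((baseL p.1 p.2 : ℝ) / p.1 + δ / 2 - x₀)⌉ ⌊(N : ℝ) * ((baseR p.1 p.2 : ℝ) / p.2 - δ / 2 - x₀)⌋ ↔
    (((baseL p.1 p.2 - k * p.1 : ℤ) : ℝ) / p.1 ≤ y - δ / 2 ∧ y + δ / 2 ≤ ((baseR p.1 p.2 - k * p.2 : ℤ) : ℝ) / p.2)) := by
  rw [fpairs, Finset.mem_filter, Finset.mem_product, Finset.mem_Icc, Finset.mem_Icc] at hp
  obtain ⟨⟨⟨h1, h2⟩, h3, h4⟩, h5, h6, h7⟩ := hp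
  have hb := base_eq p.1 p.2 h6.symm
  have hq : (0 : ℝ) < p.1 := by exact_mod_cast h1
  have hq' : (0 : ℝ) < p.2 := by exact_mod_cast h3
  have hNr : (0 : ℝ) < N := by exact_mod_cast hN
  refine ⟨⟨h1, h2, h3, h4, h5, by linear_combination hb⟩, ?_⟩
  rw [Finset.mem_Icc, Int.ceil_le, Int.le_floor]
  have e1 : y = x₀ + i / N - k := by rw [hy]; field_simp; ring
  have e2 : ((baseL p.1 p.2 - k * p.1 : ℤ) : ℝ) / p.1 = (baseL p.1 p.2 : ℝ) / p.1 - k := by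
    push_cast; field_simp
  have e3 : ((baseR p.1 p.2 - k * p.2 : ℤ) : ℝ) / p.2 = (baseR p.1 p.2 : ℝ) / p.2 - k := by
    push_cast; field_simp
  rw [e2, e3, mul_comm, ← le_div_iff₀ hNr, mul_comm (N : ℝ), ← div_le_iff₀ hNr, e1]
  constructor
  · rintro ⟨u, v⟩; constructor <;> linarith
  · rintro ⟨u, v⟩; constructor <;> linarith

theorem count_eq (n : ℕ) (hn : 1 ≤ n) (δ x₀ : ℝ) (hδ : 0 < δ) (N : ℕ) (hN : 0 < N) :
    ((Finset.Icc 1 N).filter (fun j : ℕ => FFree n δ (x₀ + (j : ℝ) / (N : ℝ)))).card =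
    ∑ p ∈ fpairs n δ, (Finset.Icc ⌈(N : ℝ) * ((baseL p.1 p.2 : ℝ) / p.1 + δ / 2 - x₀)⌉ ⌊(N : ℝ) * ((baseR p.1 p.2 : ℝ) / p.2 - δ / 2 - x₀)⌋).card := by
  have hNz : (0 : ℤ) < N := by exact_mod_cast hN
  have hNr : (0 : ℝ) < N := by exact_mod_cast hN
  have hJ : ∀ i : ℤ, ((((i - 1) % N).toNat + 1 : ℕ) : ℤ) = i - (i - 1) / N * N := by
    intro i
    have h1 := Int.emod_nonneg (i - 1) hNz.ne'
    have h2 := Int.emod_add_mul_ediv (i - 1) N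
    push_cast
    rw [Int.toNat_of_nonneg h1]
    linarith [mul_comm (N : ℤ) ((i - 1) / N)]
  have hJr : ∀ i : ℤ, ((((i - 1) % N).toNat + 1 : ℕ) : ℝ) = i - ((i - 1) / N : ℤ) * N := by
    intro i
    have := hJ i
    exact_mod_cast congrArg (fun z : ℤ => (z : ℝ)) this
  rw [← Finset.card_sigma]
  symm
  refine Finset.card_bij (fun x _ => ((x.2 - 1) % N).toNat + 1) ?_ ?_ ?_
  · rintro ⟨p, i⟩ hx
    rw [Finset.mem_sigma] at hx
    obtain ⟨hp, hi⟩ := hx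
    simp only at hp hi ⊢
    rw [Finset.mem_filter, Finset.mem_Icc]
    refine ⟨⟨by omega, ?_⟩, ?_⟩
    · have h1 := Int.emod_lt_of_pos (i - 1) hNz
      omega
    · obtain ⟨g, hg⟩ := mem_shift hN hp i ((i - 1) / N) _ rfl
      rw [hg] at hi
      rw [hJr]
      exact ffree_of_gap g hi.1 hi.2
  · rintro ⟨p, i⟩ hx ⟨p', i'⟩ hx' hij
    rw [Finset.mem_sigma] at hx hx'
    obtain ⟨hp, hi⟩ := hx
    obtain ⟨hp', hi'⟩ := hx'
    simp only at hp hi hp' hi' hij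
    obtain ⟨g, hg⟩ := mem_shift (x₀ := x₀) hN hp i ((i - 1) / N) _ rfl
    obtain ⟨g', hg'⟩ := mem_shift (x₀ := x₀) hN hp' i' ((i' - 1) / N) _ rfl
    rw [hg] at hi
    rw [hg'] at hi'
    rw [← hJr] at hi hi'
    rw [← hij] at hi'
    obtain ⟨u1, u2, u3, u4⟩ := fgap_unique g g' _ (hi.1.trans_lt (sub_lt_self _ (half_pos hδ))) ((lt_add_of_pos_right _ (half_pos hδ)).trans_le hi.2)
      (hi'.1.trans_lt (sub_lt_self _ (half_pos hδ))) ((lt_add_of_pos_right _ (half_pos hδ)).trans_le hi'.2)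
    have hpp : p = p' := Prod.ext u1 u3
    subst hpp
    have hq : (p.1 : ℤ) ≠ 0 := by have := g.1; omega
    have hk : (i - 1) / (N : ℤ) = (i' - 1) / N := by
      have : (i - 1) / (N : ℤ) * p.1 = (i' - 1) / N * p.1 := by linarith
      exact mul_right_cancel₀ hq this
    have e1 := hJ i
    have e2 := hJ i'
    rw [hij, hk] at e1
    have : i = i' := by linarith
    rw [this]
  · intro j hj
    rw [Finset.mem_filter, Finset.mem_Icc] at hj
    obtain ⟨⟨hj1, hj2⟩, hf⟩ := hj
    obtain ⟨a, q, a', q', g, h1, h2⟩ := gap_of_ffree hn hδ hf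
    have hq : (0 : ℝ) < q := by exact_mod_cast g.1
    have hq' : (0 : ℝ) < q' := by exact_mod_cast g.2.2.1
    have hcop : Nat.Coprime q' q := by
      rw [← Nat.isCoprime_iff_coprime]
      exact ⟨-a, a', by linear_combination g.2.2.2.2.2⟩
    have hg6 : (a' : ℝ) * q - a * q' = 1 := by exact_mod_cast g.2.2.2.2.2
    have hp : (q, q') ∈ fpairs n δ := by
      rw [fpairs, Finset.mem_filter, Finset.mem_product, Finset.mem_Icc, Finset.mem_Icc]
      refine ⟨⟨⟨g.1, g.2.1⟩, g.2.2.1, g.2.2.2.1⟩, g.2.2.2.2.1, hcop, ?_⟩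
      have h3 : δ ≤ (a' : ℝ) / q' - a / q := by linarith
      rw [div_sub_div _ _ hq'.ne' hq.ne', le_div_iff₀ (by positivity)] at h3
      simp only
      nlinarith
    obtain ⟨k, hk1, hk2⟩ := base_shift g.1 g.2.2.1 (base_eq q q' hcop.symm) g.2.2.2.2.2
    obtain ⟨g', hg'⟩ := mem_shift (x₀ := x₀) hN hp (j + k * N) k (x₀ + (j : ℝ) / N) (by push_cast; ring)
    refine ⟨⟨(q, q'), j + k * N⟩, ?_, ?_⟩
    · rw [Finset.mem_sigma]
      refine ⟨hp, hg'.2 ?_⟩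
      simp only [hk1, hk2, add_sub_cancel_right]
      exact ⟨h1, h2⟩
    · simp only
      have : ((j : ℤ) + k * N - 1) % N = (j : ℤ) - 1 := by
        rw [show (j : ℤ) + k * N - 1 = (j - 1) + k * N by ring, Int.add_mul_emod_self_right]
        exact Int.emod_eq_of_lt (by omega) (by omega)
      rw [this]
      omega


noncomputable def sawE (n : ℕ) (δ : ℝ) (N : ℕ) (θ : ℝ) : ℝ :=
  ∑ p ∈ fpairs n δ, (1 / 2 - Int.fract ((N : ℝ) * ((p.2 : ZMod p.1)⁻¹).val / p.1 + θ))

theorem card_Icc_real (α β : ℝ) (h : α ≤ β) : ((Finset.Icc ⌈α⌉ ⌊β⌋).card : ℝ) =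
    β - α + (1 / 2 - Int.fract β) + (1 / 2 - Int.fract (-α)) := by
  rw [Int.card_Icc]
  have h1 : 0 ≤ ⌊β⌋ + 1 - ⌈α⌉ := by
    have a1 := Int.ceil_lt_add_one α
    have a2 := Int.lt_floor_add_one β
    have : (⌈α⌉ : ℝ) < (⌊β⌋ + 2 : ℤ) := by push_cast; linarith
    have := Int.cast_lt.1 this
    omega
  have h2 : (((⌊β⌋ + 1 - ⌈α⌉).toNat : ℤ) : ℝ) = ((⌊β⌋ + 1 - ⌈α⌉ : ℤ) : ℝ) := by rw [Int.toNat_of_nonneg h1]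
  rw [← Int.cast_natCast, h2]
  rw [Int.fract, Int.fract, Int.floor_neg]
  push_cast
  ring

theorem fpairs_swap (n : ℕ) (δ : ℝ) (f : ℕ × ℕ → ℝ) : ∑ p ∈ fpairs n δ, f p.swap = ∑ p ∈ fpairs n δ, f p := by
  have : ∀ p ∈ fpairs n δ, p.swap ∈ fpairs n δ := by
    intro p hp
    rw [fpairs, Finset.mem_filter, Finset.mem_product] at hp ⊢
    obtain ⟨⟨h1, h2⟩, h3, h4, h5⟩ := hp
    refine ⟨⟨h2, h1⟩, ?_, h4.symm, ?_⟩
    · simp only [Prod.fst_swap, Prod.snd_swap]; omega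
    · simp only [Prod.fst_swap, Prod.snd_swap]; linarith [mul_comm (p.1 : ℝ) p.2]
  exact Finset.sum_bij' (fun p _ => p.swap) (fun p _ => p.swap) this this (fun p _ => p.swap_swap)
    (fun p _ => p.swap_swap) (fun p _ => rfl)

theorem baseL_val (q q' : ℕ) (hq : 1 ≤ q) (hc : Nat.Coprime q q') : ∃ k : ℤ,
    - baseL q q' = (((q' : ZMod q)⁻¹).val : ℤ) + k * q := by
  have h1 := base_eq q q' hc
  have h2 := base_eq q' q hc.symm
  change ∃ k : ℤ, - baseL q q' = baseR q' q + k * q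
  generalize baseR q q' = R at *
  generalize baseL q q' = L at *
  generalize baseR q' q = R' at *
  generalize baseL q' q = L' at *
  refine ⟨-((R' + L) * R - L * (L' + R)), ?_⟩
  linear_combination (R' + L) * h1 - L * (h1 + h2) + 2 * L * h2

theorem count_formula (n : ℕ) (hn : 1 ≤ n) (δ x₀ : ℝ) (hδ : 0 < δ) (N : ℕ) (hN : 0 < N) :
    (((Finset.Icc 1 N).filter (fun j : ℕ => FFree n δ (x₀ + (j : ℝ) / (N : ℝ)))).card : ℝ) =
    N * (∑ p ∈ fpairs n δ, (1 / ((p.1 : ℝ) * p.2) - δ)) + sawE n δ N (-(N * (δ / 2 + x₀))) + sawE n δ N (-(N * (δ / 2 - x₀))) := by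
  rw [count_eq n hn δ x₀ hδ N hN]
  have hNr : (0 : ℝ) < N := by exact_mod_cast hN
  push_cast
  have hs : sawE n δ N (-(N * (δ / 2 + x₀))) = ∑ p ∈ fpairs n δ, (1 / 2 - Int.fract ((N : ℝ) * ((p.1 : ZMod p.2)⁻¹).val / p.2 + (-(N * (δ / 2 + x₀))))) := by
    rw [sawE, ← fpairs_swap]
    rfl
  rw [hs, sawE, Finset.mul_sum, ← Finset.sum_add_distrib, ← Finset.sum_add_distrib]
  refine Finset.sum_congr rfl fun p hp => ?_
  rw [fpairs, Finset.mem_filter, Finset.mem_product, Finset.mem_Icc, Finset.mem_Icc] at hp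
  obtain ⟨⟨⟨h1, h2⟩, h3, h4⟩, h5, h6, h7⟩ := hp
  have hb := base_eq p.1 p.2 h6.symm
  have hq : (0 : ℝ) < p.1 := by exact_mod_cast h1
  have hq' : (0 : ℝ) < p.2 := by exact_mod_cast h3
  have hbr : (baseR p.1 p.2 : ℝ) * p.1 - baseL p.1 p.2 * p.2 = 1 := by exact_mod_cast hb
  have hd : (N : ℝ) * ((baseR p.1 p.2 : ℝ) / p.2 - δ / 2 - x₀) - (N : ℝ) * ((baseL p.1 p.2 : ℝ) / p.1 + δ / 2 - x₀)
      = N * (1 / ((p.1 : ℝ) * p.2) - δ) := by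
    rw [← hbr]; field_simp; ring
  have hle : δ ≤ 1 / ((p.1 : ℝ) * p.2) := by rw [le_div_iff₀ (by positivity)]; linarith
  rw [card_Icc_real _ _ (by
    have : 0 ≤ (N : ℝ) * (1 / ((p.1 : ℝ) * p.2) - δ) := mul_nonneg hNr.le (by linarith)
    linarith), hd]
  congr 1
  · congr 3
    rw [show (((p.1 : ZMod p.2)⁻¹).val : ℝ) = (baseR p.1 p.2 : ℝ) by simp [baseR]]
    ring
  · congr 1
    obtain ⟨k, hk⟩ := baseL_val p.1 p.2 h1 h6.symm
    have hk' : -(baseL p.1 p.2 : ℝ) = (((p.2 : ZMod p.1)⁻¹).val : ℝ) + k * p.1 := by exact_mod_cast hk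
    have e : -((N : ℝ) * ((baseL p.1 p.2 : ℝ) / p.1 + δ / 2 - x₀)) =
      (N : ℝ) * ((p.2 : ZMod p.1)⁻¹).val / p.1 + -(N * (δ / 2 - x₀)) + ((N * k : ℤ) : ℝ) := by
      have : (((p.2 : ZMod p.1)⁻¹).val : ℝ) = -(baseL p.1 p.2 : ℝ) - k * p.1 := by linarith
      rw [this]; push_cast; field_simp; ring
    rw [e, Int.fract_add_intCast]


theorem sawE_trivial (n : ℕ) (δ : ℝ) (N : ℕ) (θ : ℝ) : |sawE n δ N θ| ≤ (n : ℝ) ^ 2 := by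
  refine le_trans ?_ (fpairs_card n δ)
  rw [sawE]
  refine (Finset.abs_sum_le_sum_abs _ _).trans ?_
  rw [Finset.card_eq_sum_ones]
  push_cast
  refine Finset.sum_le_sum fun p _ => ?_
  generalize (N : ℝ) * ((p.2 : ZMod p.1)⁻¹).val / p.1 + θ = t
  have f0 := Int.fract_nonneg t
  have f1 := Int.fract_lt_one t
  rw [abs_le]; constructor <;> linarith

theorem sawE_tendsto (n N : ℕ → ℕ) (δ θ : ℕ → ℝ) (hδ : ∀ k, 0 < δ k) (hN : ∀ k, 0 < N k) (hn : Tendsto n atTop atTop)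
    (K : ℝ) (hK : 0 < K) (hKN : ∀ k, (n k : ℝ) ^ 2 ≤ K * N k) :
    Tendsto (fun k => sawE (n k) (δ k) (N k) (θ k) / N k) atTop (nhds 0) := by
  rw [Metric.tendsto_atTop]
  intro ε hε
  obtain ⟨C, hC⟩ := exists_nat_gt (2 / ε)
  have hC0 : (0 : ℝ) < C := lt_trans (by positivity) hC
  obtain ⟨n0, hn0⟩ := saw_bound C (ε / (2 * K)) (by positivity)
  obtain ⟨k0, hk0⟩ := eventually_atTop.1 (hn.eventually_ge_atTop n0)
  refine ⟨k0, fun k hk => ?_⟩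
  have hNr : (0 : ℝ) < N k := by exact_mod_cast hN k
  rw [Real.dist_eq, sub_zero, abs_div, abs_of_pos hNr, div_lt_iff₀ hNr]
  by_cases hc : N k ≤ C * n k ^ 2
  · have h1 := hn0 (n k) (hk0 k hk) (N k) (hN k) hc (δ k) (hδ k) (θ k)
    refine lt_of_le_of_lt h1 ?_
    calc ε / (2 * K) * (n k : ℝ) ^ 2 ≤ ε / (2 * K) * (K * N k) := by gcongr; exact hKN k
      _ = ε * N k / 2 := by field_simp
      _ < ε * N k := half_lt_self (by positivity)
  · push Not at hc
    have hc' : (C : ℝ) * (n k : ℝ) ^ 2 < N k := by exact_mod_cast hc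
    refine lt_of_le_of_lt (sawE_trivial _ _ _ _) ?_
    rw [div_lt_iff₀ hε] at hC
    have h3 : 2 * (n k : ℝ) ^ 2 ≤ C * ε * (n k : ℝ) ^ 2 := by gcongr
    have h4 : ε * (C * (n k : ℝ) ^ 2) < ε * N k := by gcongr
    nlinarith [sq_nonneg (n k : ℝ)]

theorem qmin_iff (L δ x : ℝ) (hδ : 0 < δ) : L - (1 / 2) * Real.log δ < Real.log (qmin x δ) ↔
    FFree ⌊Real.exp L / Real.sqrt δ⌋₊ δ x := by
  have hne : {q : ℕ | 0 < q ∧ ∃ p : ℤ, x - δ / 2 < (p : ℝ) / q ∧ (p : ℝ) / q < x + δ / 2}.Nonempty := by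
    obtain ⟨r, h1, h2⟩ := exists_rat_btwn (show x - δ / 2 < x + δ / 2 by linarith)
    refine ⟨r.den, r.den_pos, r.num, ?_⟩
    rw [← Rat.cast_def]
    exact ⟨h1, h2⟩
  have hmem := Nat.sInf_mem hne
  change qmin x δ ∈ _ at hmem
  obtain ⟨hpos, p, hp1, hp2⟩ := hmem
  have hqr : (0 : ℝ) < qmin x δ := by exact_mod_cast hpos
  have e1 : L - (1 / 2) * Real.log δ = Real.log (Real.exp L / Real.sqrt δ) := by
    rw [Real.log_div (Real.exp_pos L).ne' (Real.sqrt_pos.2 hδ).ne', Real.log_exp, Real.log_sqrt hδ.le]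
    ring
  have hE : 0 < Real.exp L / Real.sqrt δ := div_pos (Real.exp_pos L) (Real.sqrt_pos.2 hδ)
  rw [e1, Real.log_lt_log_iff hE hqr, ← Nat.floor_lt hE.le]
  constructor
  · rintro h r p hr hrn hh
    have : qmin x δ ≤ r := Nat.sInf_le ⟨hr, p, hh⟩
    omega
  · intro h
    by_contra hc
    exact h (qmin x δ) p hpos (by omega) ⟨hp1, hp2⟩

/-- reduction of the main theorem to the main term -/
theorem reduction (x₀ : ℝ) (L : ℝ)
    (δ : ℕ → ℝ) (hδpos : ∀ k, 0 < δ k) (hδ : Tendsto δ atTop (nhds 0)) (N : ℕ → ℕ) (hNpos : ∀ k, 0 < N k)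
    (c : ℝ) (hc : 0 < c) (hNδ : ∀ k, c ≤ (N k : ℝ) * δ k) (n : ℕ → ℕ) (hn : ∀ k, n k = ⌊Real.exp L / Real.sqrt (δ k)⌋₊)
    (hnt : Tendsto n atTop atTop) (ℓ : ℝ)
    (hmain : Tendsto (fun k => ∑ p ∈ fpairs (n k) (δ k), (1 / ((p.1 : ℝ) * p.2) - δ k)) atTop (nhds ℓ)) :
    Tendsto (fun k : ℕ => (((Finset.Icc 1 (N k)).filter (fun j : ℕ => L - (1 / 2) * Real.log (δ k) < Real.log (qmin (x₀ + (j : ℝ) / (N k : ℝ)) (δ k)))).card : ℝ) / (N k : ℝ)) atTop (nhds ℓ) := by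
  have hK : ∀ k, (n k : ℝ) ^ 2 ≤ (Real.exp L ^ 2 / c) * N k := by
    intro k
    have h1 : (n k : ℝ) ≤ Real.exp L / Real.sqrt (δ k) := by
      rw [hn]; exact Nat.floor_le (by positivity)
    have h2 : (n k : ℝ) ^ 2 ≤ Real.exp L ^ 2 / δ k := by
      calc (n k : ℝ) ^ 2 ≤ (Real.exp L / Real.sqrt (δ k)) ^ 2 := by gcongr
        _ = _ := by rw [div_pow, Real.sq_sqrt (hδpos k).le]
    refine h2.trans ?_
    rw [div_mul_eq_mul_div, div_le_div_iff₀ (hδpos k) hc, mul_assoc]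
    gcongr
    exact hNδ k
  have E1 := sawE_tendsto n N δ (fun k => -(N k * (δ k / 2 + x₀))) hδpos hNpos hnt _ (by positivity) hK
  have E2 := sawE_tendsto n N δ (fun k => -(N k * (δ k / 2 - x₀))) hδpos hNpos hnt _ (by positivity) hK
  have := (hmain.add E1).add E2
  rw [add_zero, add_zero] at this
  refine this.congr' ?_
  filter_upwards [hnt.eventually_ge_atTop 1] with k hk
  have hNr : (0 : ℝ) < N k := by exact_mod_cast hNpos k
  have hf := count_formula (n k) hk (δ k) x₀ (hδpos k) (N k) (hNpos k)
  have hset : (Finset.Icc 1 (N k)).filter (fun j : ℕ => L - (1 / 2) * Real.log (δ k) < Real.log (qmin (x₀ + (j : ℝ) / (N k : ℝ)) (δ k)))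
    = (Finset.Icc 1 (N k)).filter (fun j : ℕ => FFree (n k) (δ k) (x₀ + (j : ℝ) / (N k : ℝ))) := by
    refine Finset.filter_congr fun j _ => ?_
    rw [qmin_iff _ _ _ (hδpos k), hn]
  rw [hset, hf]
  field_simp


theorem riem (w : ℝ → ℝ) (hw : Continuous w) (K B : ℝ) (hL : ∀ u v, |w u - w v| ≤ K * |u - v|) (hB : ∀ u, 0 ≤ u → u ≤ 1 → |w u| ≤ B)
    (x : ℝ) (hx : 0 < x) (m : ℕ) (hm : m = ⌊x⌋₊) :
    |1 / x * ∑ k ∈ Finset.range m, w ((k + 1 : ℕ) / x) - ∫ u in (0 : ℝ)..1, w u| ≤ (K + B) / x := by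
  have hmx : (m : ℝ) ≤ x := by rw [hm]; exact Nat.floor_le hx.le
  have hxm : x < m + 1 := by rw [hm]; exact Nat.lt_floor_add_one x
  have hK : 0 ≤ K := by have := hL 1 0; have h2 := abs_nonneg (w 1 - w 0); norm_num at this; linarith
  have hi : ∀ a b, IntervalIntegrable w volume a b := fun a b => hw.intervalIntegrable a b
  have h1 := intervalIntegral.sum_integral_adjacent_intervals (f := w) (μ := volume) (a := fun k : ℕ => (k : ℝ) / x) (n := m) (fun k _ => hi _ _)
  simp only [Nat.cast_zero, zero_div] at h1
  have h2 := intervalIntegral.integral_add_adjacent_intervals (hi 0 ((m : ℝ) / x)) (hi ((m : ℝ) / x) 1)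
  rw [← h2, ← h1, Finset.mul_sum, ← sub_sub, ← Finset.sum_sub_distrib]
  have e1 : |∫ u in ((m : ℝ) / x)..1, w u| ≤ B * (1 / x) := by
    have hm1 : (m : ℝ) / x ≤ 1 := by rw [div_le_one hx]; exact hmx
    have hm0 : 0 ≤ (m : ℝ) / x := by positivity
    have := intervalIntegral.norm_integral_le_of_norm_le_const (f := w) (a := (m : ℝ) / x) (b := 1) (C := B) (by
      intro u hu
      rw [Set.uIoc_of_le hm1] at hu
      exact hB u (hm0.trans hu.1.le) hu.2)
    refine this.trans ?_
    have hB0 : 0 ≤ B := (abs_nonneg _).trans (hB 0 le_rfl zero_le_one)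
    gcongr
    rw [abs_of_nonneg (by linarith), sub_le_iff_le_add, ← add_div, le_div_iff₀ hx]
    linarith
  have e2 : ∀ k ∈ Finset.range m, |1 / x * w ((k + 1 : ℕ) / x) - ∫ u in ((k : ℝ) / x)..((k + 1 : ℕ) / x), w u| ≤ K * (1 / x) * (1 / x) := by
    intro k _
    have hd : ((k + 1 : ℕ) : ℝ) / x - k / x = 1 / x := by push_cast; ring
    have hle : (k : ℝ) / x ≤ ((k + 1 : ℕ) : ℝ) / x := by have : 0 < 1 / x := by positivity
                                                         linarith
    have : 1 / x * w ((k + 1 : ℕ) / x) = ∫ u in ((k : ℝ) / x)..((k + 1 : ℕ) / x), w ((k + 1 : ℕ) / x) := by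
      rw [intervalIntegral.integral_const, hd, smul_eq_mul]
    rw [this, ← intervalIntegral.integral_sub (by simp) (hi _ _)]
    have := intervalIntegral.norm_integral_le_of_norm_le_const (f := fun u => w ((k + 1 : ℕ) / x) - w u) (a := (k : ℝ) / x) (b := ((k + 1 : ℕ) : ℝ) / x) (C := K * (1 / x)) (by
      intro u hu
      rw [Set.uIoc_of_le hle] at hu
      refine (hL _ _).trans ?_
      gcongr
      rw [abs_of_nonneg (by linarith [hu.2])]
      linarith [hu.1])
    rw [hd, abs_of_pos (by positivity : (0 : ℝ) < 1 / x)] at this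
    exact this
  have e3 : |∑ k ∈ Finset.range m, (1 / x * w ((k + 1 : ℕ) / x) - ∫ u in ((k : ℝ) / x)..((k + 1 : ℕ) / x), w u)| ≤ K * (1 / x) := by
    refine (Finset.abs_sum_le_sum_abs _ _).trans ((Finset.sum_le_sum e2).trans ?_)
    rw [Finset.sum_const, Finset.card_range, nsmul_eq_mul]
    calc (m : ℝ) * (K * (1 / x) * (1 / x)) ≤ x * (K * (1 / x) * (1 / x)) := by gcongr
      _ = _ := by field_simp
  calc _ ≤ _ := abs_sub _ _
    _ ≤ K * (1 / x) + B * (1 / x) := add_le_add e3 e1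
    _ = _ := by ring

noncomputable def wK (κ u : ℝ) : ℝ := max 0 (1 / max 1 (κ * u) - 1 + u)

theorem wK_cont (κ : ℝ) : Continuous (wK κ) := by
  unfold wK
  refine continuous_const.max (((continuous_const.div (continuous_const.max (continuous_const.mul continuous_id)) ?_).sub continuous_const).add continuous_id)
  intro u
  have := le_max_left 1 (κ * u)
  exact (lt_of_lt_of_le one_pos this).ne'

theorem max_lip (c a b : ℝ) : |max c a - max c b| ≤ |a - b| := by
  rw [max_comm c a, max_comm c b]
  exact abs_max_sub_max_le_abs a b c

theorem wK_lip (κ : ℝ) (hκ : 0 < κ) (u v : ℝ) : |wK κ u - wK κ v| ≤ (κ + 1) * |u - v| := by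
  unfold wK
  have h1 := max_lip 0 (1 / max 1 (κ * u) - 1 + u) (1 / max 1 (κ * v) - 1 + v)
  refine h1.trans ?_
  have h2 := max_lip 1 (κ * v) (κ * u)
  rw [← mul_sub, abs_mul, abs_of_pos hκ, abs_sub_comm] at h2
  have a1 := le_max_left 1 (κ * u)
  have a2 := le_max_left 1 (κ * v)
  have h3 : |1 / max 1 (κ * u) - 1 / max 1 (κ * v)| ≤ κ * |u - v| := by
    rw [div_sub_div _ _ (by linarith) (by linarith), abs_div, one_mul, mul_one, abs_sub_comm]
    rw [abs_sub_comm v u] at h2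
    refine (div_le_self (abs_nonneg _) ?_).trans h2
    rw [abs_of_pos (by nlinarith)]
    nlinarith
  calc _ = |(1 / max 1 (κ * u) - 1 / max 1 (κ * v)) + (u - v)| := by congr 1; ring
    _ ≤ _ := abs_add_le _ _
    _ ≤ κ * |u - v| + |u - v| := by gcongr
    _ = _ := by ring

theorem wK_bd (κ : ℝ) (u : ℝ) (h0 : 0 ≤ u) (h1 : u ≤ 1) : |wK κ u| ≤ 1 := by
  unfold wK
  have h := le_max_left 1 (κ * u)
  have : 1 / max 1 (κ * u) ≤ 1 := by rw [div_le_one (by linarith)]; exact h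
  rw [abs_of_nonneg (le_max_left _ _)]
  exact max_le zero_le_one (by linarith)


noncomputable def aS (t : ℝ) (d n : ℕ) : Finset (ℕ × ℕ) :=
  ((Finset.Icc 1 n) ×ˢ (Finset.Icc 1 n)).filter (fun p => d * p.1 ≤ n ∧ d * p.2 ≤ n ∧ n < d * p.1 + d * p.2 ∧
    ((d * p.1 : ℕ) : ℝ) * ((d * p.2 : ℕ) : ℝ) * t ≤ 1)

theorem coprime_moebius (n a b : ℕ) (ha : 1 ≤ a) (han : a ≤ n) :
    (if Nat.Coprime b a then (1 : ℤ) else 0) = ∑ d ∈ Finset.range (n + 1), if d ∣ a ∧ d ∣ b then ArithmeticFunction.moebius d else 0 := by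
  have h1 : (ArithmeticFunction.moebius * (ArithmeticFunction.zeta : ArithmeticFunction ℤ)) (Nat.gcd b a) = if Nat.Coprime b a then (1 : ℤ) else 0 := by
    rw [ArithmeticFunction.moebius_mul_coe_zeta, ArithmeticFunction.one_apply]
  rw [← h1, ArithmeticFunction.coe_mul_zeta_apply, ← Finset.sum_filter]
  refine Finset.sum_congr ?_ fun _ _ => rfl
  ext d
  rw [Nat.mem_divisors, Finset.mem_filter, Finset.mem_range, Nat.dvd_gcd_iff]
  constructor
  · rintro ⟨⟨h1, h2⟩, h3⟩
    exact ⟨by have := Nat.le_of_dvd ha h2; omega, h2, h1⟩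
  · rintro ⟨_, h2, h3⟩
    exact ⟨⟨h3, h2⟩, (Nat.gcd_pos_of_pos_right _ ha).ne'⟩

theorem fpairs_moebius (n : ℕ) (t : ℝ) : ((fpairs n t).card : ℤ) =
    ∑ d ∈ Finset.range (n + 1), ArithmeticFunction.moebius d * ((aS t d n).card : ℤ) := by
  set R := ((Finset.Icc 1 n) ×ˢ (Finset.Icc 1 n)).filter (fun p => n < p.1 + p.2 ∧ (p.1 : ℝ) * p.2 * t ≤ 1) with hR
  have h1 : fpairs n t = R.filter (fun p => Nat.Coprime p.2 p.1) := by
    rw [hR, fpairs, Finset.filter_filter]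
    refine Finset.filter_congr fun p _ => ?_
    tauto
  rw [h1, Finset.card_filter]
  push_cast
  rw [Finset.sum_congr rfl (g := fun p : ℕ × ℕ => ∑ d ∈ Finset.range (n + 1), if d ∣ p.1 ∧ d ∣ p.2 then ArithmeticFunction.moebius d else 0)]
  · rw [Finset.sum_comm]
    refine Finset.sum_congr rfl fun d _ => ?_
    rw [← Finset.sum_filter, Finset.sum_const, nsmul_eq_mul, mul_comm]
    congr 2
    symm
    refine Finset.card_bij (fun p _ => (d * p.1, d * p.2)) ?_ ?_ ?_
    · intro p hp
      rw [aS, Finset.mem_filter, Finset.mem_product, Finset.mem_Icc, Finset.mem_Icc] at hp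
      rw [Finset.mem_filter, hR, Finset.mem_filter, Finset.mem_product, Finset.mem_Icc, Finset.mem_Icc]
      obtain ⟨⟨⟨a1, a2⟩, a3, a4⟩, a5, a6, a7, a8⟩ := hp
      have hd : 1 ≤ d := by
        rcases Nat.eq_zero_or_pos d with rfl | h
        · simp at a7
        · exact h
      exact ⟨⟨⟨⟨Nat.mul_pos hd a1, a5⟩, Nat.mul_pos hd a3, a6⟩, a7, a8⟩, dvd_mul_right _ _, dvd_mul_right _ _⟩
    · intro p hp p' hp' he
      rw [aS, Finset.mem_filter] at hp
      obtain ⟨_, a5, a6, a7, a8⟩ := hp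
      have hd : 0 < d := by
        rcases Nat.eq_zero_or_pos d with rfl | h
        · simp at a7
        · exact h
      rw [Prod.mk.injEq] at he
      exact Prod.ext (Nat.eq_of_mul_eq_mul_left hd he.1) (Nat.eq_of_mul_eq_mul_left hd he.2)
    · rintro ⟨a, b⟩ hp
      rw [Finset.mem_filter, hR, Finset.mem_filter, Finset.mem_product, Finset.mem_Icc, Finset.mem_Icc] at hp
      obtain ⟨⟨⟨⟨a1, a2⟩, a3, a4⟩, a5, a6⟩, ⟨x, hx⟩, y, hy⟩ := hp
      simp only at a1 a2 a3 a4 a5 a6 hx hy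
      subst hx hy
      have hx : 0 < x := Nat.pos_of_mul_pos_left a1
      have hd : 0 < d := Nat.pos_of_mul_pos_right a1
      have hy : 0 < y := Nat.pos_of_mul_pos_left a3
      refine ⟨(x, y), ?_, rfl⟩
      rw [aS, Finset.mem_filter, Finset.mem_product, Finset.mem_Icc, Finset.mem_Icc]
      exact ⟨⟨⟨hx, (Nat.le_mul_of_pos_left x hd).trans a2⟩, hy, (Nat.le_mul_of_pos_left y hd).trans a4⟩, a2, a4, a5, a6⟩
  · intro p hp
    rw [hR, Finset.mem_filter, Finset.mem_product, Finset.mem_Icc, Finset.mem_Icc] at hp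
    exact coprime_moebius n p.1 p.2 hp.1.1.1 hp.1.1.2


theorem aS_zero (t : ℝ) (n : ℕ) : aS t 0 n = ∅ := by
  rw [aS, Finset.filter_eq_empty_iff]
  rintro p _ ⟨_, _, h, _⟩
  simp at h

theorem aS_empty (t : ℝ) (d n : ℕ) (h : n < d) : aS t d n = ∅ := by
  rw [aS, Finset.filter_eq_empty_iff]
  rintro p hp ⟨h1, _⟩
  rw [Finset.mem_product, Finset.mem_Icc] at hp
  have := Nat.le_mul_of_pos_right d hp.1.1
  omega

theorem aS_bound (t : ℝ) (d n : ℕ) : ((aS t d n).card : ℝ) ≤ (n : ℝ) ^ 2 * (1 / (d : ℝ) ^ 2) := by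
  rcases Nat.eq_zero_or_pos d with rfl | hd
  · rw [aS_zero]; simp
  have h1 : aS t d n ⊆ (Finset.Icc 1 (n / d)) ×ˢ (Finset.Icc 1 (n / d)) := by
    intro p hp
    rw [aS, Finset.mem_filter, Finset.mem_product, Finset.mem_Icc, Finset.mem_Icc] at hp
    rw [Finset.mem_product, Finset.mem_Icc, Finset.mem_Icc, Nat.le_div_iff_mul_le hd, Nat.le_div_iff_mul_le hd, mul_comm, mul_comm p.2]
    exact ⟨⟨hp.1.1.1, hp.2.1⟩, hp.1.2.1, hp.2.2.1⟩
  have h2 := Finset.card_le_card h1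
  rw [Finset.card_product, Nat.card_Icc] at h2
  simp only [Nat.add_sub_cancel] at h2
  have h3 : ((n / d : ℕ) : ℝ) ≤ (n : ℝ) / d := Nat.cast_div_le
  have h4 : ((aS t d n).card : ℝ) ≤ ((n / d : ℕ) : ℝ) * ((n / d : ℕ) : ℝ) := by exact_mod_cast h2
  refine h4.trans ?_
  calc ((n / d : ℕ) : ℝ) * ((n / d : ℕ) : ℝ) ≤ ((n : ℝ) / d) * ((n : ℝ) / d) := by gcongr
    _ = _ := by ring

theorem floor_diff (α β : ℝ) (ha : 0 ≤ α) (hb : 0 ≤ β) : |((⌊β⌋₊ - ⌊α⌋₊ : ℕ) : ℝ) - max 0 (β - α)| ≤ 1 := by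
  have a1 := Nat.floor_le ha
  have a2 := Nat.lt_floor_add_one α
  have b1 := Nat.floor_le hb
  have b2 := Nat.lt_floor_add_one β
  rcases le_total α β with h | h
  · rw [max_eq_right (by linarith), Nat.cast_sub (Nat.floor_mono h), abs_le]
    constructor <;> linarith
  · rw [max_eq_left (by linarith), Nat.sub_eq_zero_of_le (Nat.floor_mono h)]
    simp

theorem aS_card (κ : ℝ) (hκ : 0 < κ) (d n : ℕ) (hd : 0 < d) (hn : 0 < n) (x : ℝ) (hx : x = (n : ℝ) / d) (m : ℕ) (hm : m = ⌊x⌋₊) :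
    (aS (κ / (n : ℝ) ^ 2) d n).card = ∑ k ∈ Finset.range m,
      (Finset.Ioc ⌊x - (k + 1 : ℕ)⌋₊ ⌊x / max 1 (κ * (((k + 1 : ℕ) : ℝ) / x))⌋₊).card := by
  have hdr : (0 : ℝ) < d := by exact_mod_cast hd
  have hnr : (0 : ℝ) < n := by exact_mod_cast hn
  have hx0 : 0 < x := by rw [hx]; positivity
  have hnx : (n : ℝ) = d * x := by rw [hx]; field_simp
  have key : ∀ q r : ℕ, ((d * q : ℕ) : ℝ) * ((d * r : ℕ) : ℝ) * (κ / (n : ℝ) ^ 2) ≤ 1 ↔ (r : ℝ) * (κ * ((q : ℝ) / x)) ≤ x := by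
    intro q r
    rw [hnx]
    push_cast
    rw [show (d : ℝ) * q * (d * r) * (κ / (d * x) ^ 2) = (r * (κ * (q / x))) / x by field_simp, div_le_one hx0]
  have key2 : ∀ q r : ℕ, (r : ℝ) ≤ x / max 1 (κ * ((q : ℝ) / x)) ↔ (r : ℝ) ≤ x ∧ (r : ℝ) * (κ * ((q : ℝ) / x)) ≤ x := by
    intro q r
    rw [le_div_iff₀ (by positivity), mul_max_of_nonneg _ _ (Nat.cast_nonneg r), max_le_iff, mul_one]
  have key3 : ∀ r : ℕ, d * r ≤ n ↔ (r : ℝ) ≤ x := by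
    intro r
    rw [hx, le_div_iff₀ hdr, mul_comm]
    exact_mod_cast Iff.rfl
  have key4 : ∀ q r : ℕ, n < d * q + d * r ↔ x - q < r := by
    intro q r
    rw [hx, sub_lt_iff_lt_add, div_lt_iff₀ hdr]
    rw [show ((r : ℝ) + q) * d = d * q + d * r by ring]
    exact_mod_cast Iff.rfl
  rw [← Finset.card_sigma]
  symm
  refine Finset.card_bij (fun y _ => (y.1 + 1, y.2)) ?_ ?_ ?_
  · rintro ⟨k, r⟩ hy
    rw [Finset.mem_sigma, Finset.mem_range, Finset.mem_Ioc] at hy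
    obtain ⟨h1, h2, h3⟩ := hy
    simp only at h1 h2 h3
    have hq : ((k + 1 : ℕ) : ℝ) ≤ x := by
      rw [← Nat.le_floor_iff hx0.le]; omega
    rw [Nat.floor_lt (by linarith)] at h2
    rw [Nat.le_floor_iff (by positivity), key2] at h3
    have g1 := (key3 (k + 1)).2 hq
    have g2 := (key3 r).2 h3.1
    have hr : 1 ≤ r := by
      have : (0 : ℝ) < r := by linarith
      exact_mod_cast this
    rw [aS, Finset.mem_filter, Finset.mem_product, Finset.mem_Icc, Finset.mem_Icc]
    exact ⟨⟨⟨by simp, (Nat.le_mul_of_pos_left _ hd).trans g1⟩, hr, (Nat.le_mul_of_pos_left _ hd).trans g2⟩, g1, g2,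
      (key4 _ _).2 h2, (key _ _).2 h3.2⟩
  · rintro ⟨k, r⟩ _ ⟨k', r'⟩ _ he
    simp only [Prod.mk.injEq, Nat.add_right_cancel_iff] at he
    obtain ⟨rfl, rfl⟩ := he
    rfl
  · rintro ⟨q, r⟩ hp
    rw [aS, Finset.mem_filter, Finset.mem_product, Finset.mem_Icc, Finset.mem_Icc] at hp
    obtain ⟨⟨⟨h1, h2⟩, h3, h4⟩, h5, h6, h7, h8⟩ := hp
    simp only at h1 h2 h3 h4 h5 h6 h7 h8
    obtain ⟨k, rfl⟩ : ∃ k, q = k + 1 := ⟨q - 1, by omega⟩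
    refine ⟨⟨k, r⟩, ?_, rfl⟩
    rw [key3] at h5 h6
    rw [key4] at h7
    rw [key] at h8
    rw [Finset.mem_sigma, Finset.mem_range, Finset.mem_Ioc]
    simp only
    rw [Nat.floor_lt (by linarith), Nat.le_floor_iff (by positivity), key2]
    refine ⟨?_, h7, h6, h8⟩
    have : k + 1 ≤ ⌊x⌋₊ := Nat.le_floor h5
    omega

theorem aS_asym (κ : ℝ) (hκ : 0 < κ) (d n : ℕ) (hd : 0 < d) (hn : 0 < n) :
    |((aS (κ / (n : ℝ) ^ 2) d n).card : ℝ) / (n : ℝ) ^ 2 - (1 / (d : ℝ) ^ 2) * ∫ u in (0 : ℝ)..1, wK κ u| ≤ (κ + 3) / (d * n) := by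
  have hdr : (0 : ℝ) < d := by exact_mod_cast hd
  have hnr : (0 : ℝ) < n := by exact_mod_cast hn
  set x := (n : ℝ) / d with hx
  have hx0 : 0 < x := by positivity
  set m := ⌊x⌋₊ with hm
  have hmx : (m : ℝ) ≤ x := Nat.floor_le hx0.le
  have h1 := riem (wK κ) (wK_cont κ) (κ + 1) 1 (wK_lip κ hκ) (wK_bd κ) x hx0 m hm
  have h2 : |((aS (κ / (n : ℝ) ^ 2) d n).card : ℝ) - x * ∑ k ∈ Finset.range m, wK κ ((k + 1 : ℕ) / x)| ≤ x := by
    rw [aS_card κ hκ d n hd hn x hx m hm]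
    push_cast
    rw [Finset.mul_sum, ← Finset.sum_sub_distrib]
    refine (Finset.abs_sum_le_sum_abs _ _).trans ?_
    refine le_trans (Finset.sum_le_sum (g := fun _ => (1 : ℝ)) ?_) (by simpa using hmx)
    intro k hk
    rw [Finset.mem_range] at hk
    have hq : ((k + 1 : ℕ) : ℝ) ≤ x := (Nat.cast_le.2 hk).trans hmx
    have h3 := floor_diff (x - (k + 1 : ℕ)) (x / max 1 (κ * (((k + 1 : ℕ) : ℝ) / x))) (by linarith) (by positivity)
    rw [Nat.card_Ioc]
    have e : x * wK κ (((k + 1 : ℕ) : ℝ) / x) = max 0 (x / max 1 (κ * (((k + 1 : ℕ) : ℝ) / x)) - (x - (k + 1 : ℕ))) := by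
      rw [wK, mul_max_of_nonneg _ _ hx0.le, mul_zero]
      congr 1
      have : x * (((k + 1 : ℕ) : ℝ) / x) = (k + 1 : ℕ) := by field_simp
      rw [mul_add, mul_sub, this]; ring
    push_cast at e h3 ⊢
    rw [e]
    exact h3
  have e1 : ((aS (κ / (n : ℝ) ^ 2) d n).card : ℝ) / (n : ℝ) ^ 2 - (1 / (d : ℝ) ^ 2) * ∫ u in (0 : ℝ)..1, wK κ u
     = (((aS (κ / (n : ℝ) ^ 2) d n).card : ℝ) - x * ∑ k ∈ Finset.range m, wK κ ((k + 1 : ℕ) / x)) / (n : ℝ) ^ 2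
      + (1 / (d : ℝ) ^ 2) * (1 / x * ∑ k ∈ Finset.range m, wK κ ((k + 1 : ℕ) / x) - ∫ u in (0 : ℝ)..1, wK κ u) := by
    generalize ∑ k ∈ Finset.range m, wK κ ((k + 1 : ℕ) / x) = S
    generalize ∫ u in (0 : ℝ)..1, wK κ u = I
    generalize ((aS (κ / (n : ℝ) ^ 2) d n).card : ℝ) = A
    rw [hx]
    field_simp
    ring
  rw [e1]
  refine (abs_add_le _ _).trans ?_
  rw [abs_div, abs_mul, abs_of_pos (by positivity : (0 : ℝ) < (n : ℝ) ^ 2), abs_of_pos (by positivity : (0 : ℝ) < 1 / (d : ℝ) ^ 2)]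
  calc _ ≤ x / (n : ℝ) ^ 2 + (1 / (d : ℝ) ^ 2) * ((κ + 1 + 1) / x) := by gcongr
    _ = _ := by rw [hx]; field_simp; ring

theorem moebius_sum : ∑' d : ℕ, (ArithmeticFunction.moebius d : ℝ) * (1 / (d : ℝ) ^ 2) = 6 / Real.pi ^ 2 := by
  have h := ArithmeticFunction.LSeries_zeta_mul_Lseries_moebius (s := 2) (by norm_num)
  rw [ArithmeticFunction.LSeries_zeta_eq_riemannZeta (by norm_num), riemannZeta_two] at h
  have e : LSeries (fun n => (ArithmeticFunction.moebius n : ℂ)) 2 = ((∑' d : ℕ, (ArithmeticFunction.moebius d : ℝ) * (1 / (d : ℝ) ^ 2) : ℝ) : ℂ) := by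
    rw [LSeries, Complex.ofReal_tsum]
    refine tsum_congr fun d => ?_
    rw [LSeries.term]
    split_ifs with h0
    · simp [h0]
    · push_cast
      rw [show ((2 : ℂ)) = ((2 : ℕ) : ℂ) by norm_num, Complex.cpow_natCast]
      ring
  rw [e] at h
  have h' : Real.pi ^ 2 / 6 * ∑' d : ℕ, (ArithmeticFunction.moebius d : ℝ) * (1 / (d : ℝ) ^ 2) = 1 := by exact_mod_cast h
  generalize ∑' d : ℕ, (ArithmeticFunction.moebius d : ℝ) * (1 / (d : ℝ) ^ 2) = S at *
  have := Real.pi_pos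
  field_simp at h' ⊢
  linarith

theorem fpairs_asym (κ : ℝ) (hκ : 0 < κ) : Tendsto (fun n : ℕ => ((fpairs n (κ / (n : ℝ) ^ 2)).card : ℝ) / (n : ℝ) ^ 2) atTop
    (nhds (6 / Real.pi ^ 2 * ∫ u in (0 : ℝ)..1, wK κ u)) := by
  have hs : Summable (fun d : ℕ => 1 / (d : ℝ) ^ 2) := Real.summable_one_div_nat_pow.2 (by norm_num)
  have hmu : ∀ d : ℕ, |(ArithmeticFunction.moebius d : ℝ)| ≤ 1 := fun d => by
    exact_mod_cast ArithmeticFunction.abs_moebius_le_one (n := d)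
  have h := tendsto_tsum_of_dominated_convergence (𝓕 := atTop) (f := fun (n : ℕ) (d : ℕ) => (ArithmeticFunction.moebius d : ℝ) * (((aS (κ / (n : ℝ) ^ 2) d n).card : ℝ) / (n : ℝ) ^ 2))
    (g := fun d : ℕ => (ArithmeticFunction.moebius d : ℝ) * (1 / (d : ℝ) ^ 2 * ∫ u in (0 : ℝ)..1, wK κ u)) hs ?_ ?_
  · have e : ∑' d : ℕ, (ArithmeticFunction.moebius d : ℝ) * (1 / (d : ℝ) ^ 2 * ∫ u in (0 : ℝ)..1, wK κ u) = 6 / Real.pi ^ 2 * ∫ u in (0 : ℝ)..1, wK κ u := by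
      rw [← moebius_sum, ← tsum_mul_right]
      exact tsum_congr fun d => by ring
    rw [e] at h
    refine h.congr fun n => ?_
    have h1 := fpairs_moebius n (κ / (n : ℝ) ^ 2)
    have h2 : ((fpairs n (κ / (n : ℝ) ^ 2)).card : ℝ) = ∑ d ∈ Finset.range (n + 1), (ArithmeticFunction.moebius d : ℝ) * ((aS (κ / (n : ℝ) ^ 2) d n).card : ℝ) := by
      exact_mod_cast congrArg (fun z : ℤ => (z : ℝ)) h1
    rw [tsum_eq_sum (s := Finset.range (n + 1)), h2, Finset.sum_div]
    · exact Finset.sum_congr rfl fun d _ => by ring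
    · intro d hd
      rw [aS_empty _ d n (by simpa using hd)]
      simp
  · intro d
    refine Tendsto.const_mul _ ?_
    rcases Nat.eq_zero_or_pos d with rfl | hd
    · simp [aS_zero]
    rw [tendsto_iff_dist_tendsto_zero]
    have hz : Tendsto (fun n : ℕ => (κ + 3) / d * (1 / (n : ℝ))) atTop (nhds 0) := by
      have := (tendsto_one_div_atTop_nhds_zero_nat (𝕜 := ℝ)).const_mul ((κ + 3) / (d : ℝ))
      rwa [mul_zero] at this
    refine squeeze_zero' (Eventually.of_forall fun _ => dist_nonneg) ?_ hz
    filter_upwards [eventually_gt_atTop 0] with n hn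
    rw [Real.dist_eq]
    refine (aS_asym κ hκ d n hd hn).trans (le_of_eq ?_)
    rw [div_mul_div_comm, mul_one]
  · filter_upwards [eventually_gt_atTop 0] with n hn d
    have hnr : (0 : ℝ) < n := by exact_mod_cast hn
    rw [norm_mul, Real.norm_eq_abs, Real.norm_eq_abs, abs_of_nonneg (a := _ / _) (by positivity)]
    refine (mul_le_of_le_one_left (by positivity) (hmu d)).trans ?_
    rw [div_le_iff₀ (by positivity), mul_comm]
    exact aS_bound _ _ _


theorem int_piece (κ : ℝ) (hκ : 0 < κ) (a b : ℝ) (ha : 0 < a) (hab : a ≤ b) :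
    ∫ u in a..b, (1 / (κ * u) - 1 + u) = (Real.log b - Real.log a) / κ - (b - a) + (b ^ 2 - a ^ 2) / 2 := by
  have h : ∀ u ∈ Set.uIcc a b, HasDerivAt (fun u => Real.log u / κ - u + u ^ 2 / 2) (1 / (κ * u) - 1 + u) u := by
    intro u hu
    rw [Set.uIcc_of_le hab] at hu
    have hu0 : u ≠ 0 := (ha.trans_le hu.1).ne'
    have hD := (((Real.hasDerivAt_log hu0).div_const κ).sub (hasDerivAt_id u)).add ((hasDerivAt_pow 2 u).div_const 2)
    refine HasDerivAt.congr_deriv hD ?_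
    have e : 1 / (κ * u) = u⁻¹ / κ := by rw [one_div, mul_inv, mul_comm, div_eq_mul_inv]
    rw [e]
    norm_num
  rw [intervalIntegral.integral_eq_sub_of_hasDerivAt h]
  · ring
  · apply ContinuousOn.intervalIntegrable
    intro u hu
    rw [Set.uIcc_of_le hab] at hu
    have hu0 : u ≠ 0 := (ha.trans_le hu.1).ne'
    have : κ * u ≠ 0 := mul_ne_zero hκ.ne' hu0
    exact ContinuousAt.continuousWithinAt (by fun_prop (disch := assumption))

theorem wK_small (κ u : ℝ) (hu : 0 ≤ u) (h : κ * u ≤ 1) : wK κ u = u := by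
  rw [wK, max_eq_left h]; simp [hu]

theorem wK_big (κ u : ℝ) (hκ : 0 < κ) (h : 1 ≤ κ * u) (h2 : 0 ≤ κ * u ^ 2 - κ * u + 1) : wK κ u = 1 / (κ * u) - 1 + u := by
  have hu : 0 < u := by
    by_contra hc
    push Not at hc
    nlinarith
  rw [wK, max_eq_right h, max_eq_right]
  have : 1 / (κ * u) - 1 + u = (κ * u ^ 2 - κ * u + 1) / (κ * u) := by field_simp; ring
  rw [this]; positivity

theorem wK_zero (κ u : ℝ) (hκ : 0 < κ) (h : 1 ≤ κ * u) (h2 : κ * u ^ 2 - κ * u + 1 ≤ 0) : wK κ u = 0 := by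
  have hu : 0 < u := by
    by_contra hc
    push Not at hc
    nlinarith
  rw [wK, max_eq_right h, max_eq_left]
  have : 1 / (κ * u) - 1 + u = (κ * u ^ 2 - κ * u + 1) / (κ * u) := by field_simp; ring
  rw [this]; exact div_nonpos_of_nonpos_of_nonneg h2 (by positivity)

theorem wK_int (κ a b : ℝ) : IntervalIntegrable (wK κ) volume a b := (wK_cont κ).intervalIntegrable a b

theorem int_low (κ b : ℝ) (hb : 0 ≤ b) (h : ∀ u, 0 ≤ u → u ≤ b → κ * u ≤ 1) : ∫ u in (0 : ℝ)..b, wK κ u = b ^ 2 / 2 := by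
  rw [intervalIntegral.integral_congr (g := fun u => u), integral_id]
  · ring
  · intro u hu
    rw [Set.uIcc_of_le hb] at hu
    exact wK_small κ u hu.1 (h u hu.1 hu.2)

theorem int_mid (κ a b : ℝ) (hκ : 0 < κ) (ha : 0 < a) (hab : a ≤ b) (h : ∀ u, a ≤ u → u ≤ b → 1 ≤ κ * u ∧ 0 ≤ κ * u ^ 2 - κ * u + 1) :
    ∫ u in a..b, wK κ u = (Real.log b - Real.log a) / κ - (b - a) + (b ^ 2 - a ^ 2) / 2 := by
  rw [← int_piece κ hκ a b ha hab]
  refine intervalIntegral.integral_congr fun u hu => ?_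
  rw [Set.uIcc_of_le hab] at hu
  exact wK_big κ u hκ (h u hu.1 hu.2).1 (h u hu.1 hu.2).2

theorem int_zero (κ a b : ℝ) (hκ : 0 < κ) (hab : a ≤ b) (h : ∀ u, a ≤ u → u ≤ b → 1 ≤ κ * u ∧ κ * u ^ 2 - κ * u + 1 ≤ 0) :
    ∫ u in a..b, wK κ u = 0 := by
  rw [intervalIntegral.integral_congr (g := fun _ => 0)]
  · simp
  · intro u hu
    rw [Set.uIcc_of_le hab] at hu
    exact wK_zero κ u hκ (h u hu.1 hu.2).1 (h u hu.1 hu.2).2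

theorem eta_area (s : ℝ) : etaLog s = 2 * Real.exp (2 * s) * (6 / Real.pi ^ 2 * ∫ u in (0 : ℝ)..1, wK (Real.exp (2 * s)) u) := by
  have hlog : Real.log (Real.exp (2 * s)) = 2 * s := Real.log_exp _
  have hneg : Real.exp (-2 * s) = 1 / Real.exp (2 * s) := by
    rw [show -2 * s = -(2 * s) by ring, Real.exp_neg, one_div]
  have hk1 : s ≤ 0 ↔ Real.exp (2 * s) ≤ 1 := by
    rw [Real.exp_le_one_iff]; constructor <;> intro h <;> linarith
  have hk4 : s ≤ Real.log 2 ↔ Real.exp (2 * s) ≤ 4 := by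
    rw [Real.le_log_iff_exp_le two_pos, two_mul, Real.exp_add]
    have := Real.exp_pos s
    constructor <;> intro h <;> nlinarith
  rw [etaLog, hneg]
  have hκ : 0 < Real.exp (2 * s) := Real.exp_pos _
  generalize Real.exp (2 * s) = κ at *
  by_cases h1 : s ≤ 0
  · rw [if_pos h1, int_low κ 1 zero_le_one]
    · ring
    · intro u h0 hu; have := hk1.1 h1; nlinarith
  rw [if_neg h1]
  have hκ1 : 1 < κ := by rw [hk1] at h1; linarith
  have hi0 : 0 < 1 / κ := by positivity
  have hi1 : 1 / κ < 1 := by rw [div_lt_one hκ]; exact hκ1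
  have hck : κ * (1 / κ) = 1 := by field_simp
  have hlow : ∫ u in (0 : ℝ)..(1 / κ), wK κ u = (1 / κ) ^ 2 / 2 := by
    refine int_low κ _ hi0.le fun u h0 hu => ?_
    rw [← hck]; gcongr
  have hge : ∀ u, 1 / κ ≤ u → 1 ≤ κ * u := fun u hu => by
    rw [← hck]; gcongr
  have hlogi : Real.log (1 / κ) = - (2 * s) := by rw [one_div, Real.log_inv, hlog]
  by_cases h2 : s ≤ Real.log 2
  · rw [if_pos h2, ← intervalIntegral.integral_add_adjacent_intervals (wK_int κ 0 (1 / κ)) (wK_int κ (1 / κ) 1), hlow,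
      int_mid κ (1 / κ) 1 hκ hi0 hi1.le, hlogi, Real.log_one]
    · field_simp
      ring
    · intro u hu _
      refine ⟨hge u hu, ?_⟩
      have := hk4.1 h2
      nlinarith [sq_nonneg (u - 1 / 2), mul_nonneg hκ.le (sq_nonneg (u - 1 / 2))]
  rw [if_neg h2]
  have hκ4 : 4 < κ := by rw [hk4] at h2; linarith
  have hr0 : 0 < 1 / 4 - 1 / κ := by
    have : 1 / κ < 1 / 4 := by gcongr
    linarith
  have hsq := Real.sq_sqrt hr0.le
  have hrp := Real.sqrt_pos.2 hr0
  set r := Real.sqrt (1 / 4 - 1 / κ) with hr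
  have hrh : r < 1 / 2 := by nlinarith
  have hprod : (1 / 2 + r) * (1 / 2 - r) = 1 / κ := by linear_combination -hsq
  have hl : 1 / κ ≤ 1 / 2 - r := by rw [← hprod]; nlinarith
  have hquad : ∀ u, κ * u ^ 2 - κ * u + 1 = κ * ((u - (1 / 2 - r)) * (u - (1 / 2 + r))) := by
    intro u
    have : κ * u ^ 2 - κ * u + 1 = κ * (u ^ 2 - u + 1 / κ) := by rw [mul_add, hck]; ring
    rw [this, ← hprod]; ring
  have hlr : Real.log (1 / 2 - r) = -(2 * s) - Real.log (1 / 2 + r) := by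
    rw [← hlogi, ← hprod, Real.log_mul (by linarith) (by linarith)]; ring
  rw [← intervalIntegral.integral_add_adjacent_intervals (wK_int κ 0 (1 / 2 + r)) (wK_int κ (1 / 2 + r) 1),
    ← intervalIntegral.integral_add_adjacent_intervals (wK_int κ 0 (1 / 2 - r)) (wK_int κ (1 / 2 - r) (1 / 2 + r)),
    ← intervalIntegral.integral_add_adjacent_intervals (wK_int κ 0 (1 / κ)) (wK_int κ (1 / κ) (1 / 2 - r)), hlow,
    int_mid κ (1 / κ) (1 / 2 - r) hκ hi0 hl, int_zero κ (1 / 2 - r) (1 / 2 + r) hκ (by linarith),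
    int_mid κ (1 / 2 + r) 1 hκ (by linarith) (by linarith), hlogi, Real.log_one, hlr]
  · have hpi := Real.pi_pos
    generalize Real.log (1 / 2 + r) = Λ
    field_simp
    ring
  · intro u hu _
    refine ⟨hge u (by linarith), ?_⟩
    rw [hquad]
    exact mul_nonneg hκ.le (mul_nonneg (by linarith) (by linarith))
  · intro u hu hu2
    refine ⟨hge u (by linarith), ?_⟩
    rw [hquad]
    exact mul_nonpos_of_nonneg_of_nonpos hκ.le (mul_nonpos_of_nonneg_of_nonpos (by linarith) (by linarith))
  · intro u hu hu2
    refine ⟨hge u (by linarith), ?_⟩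
    rw [hquad]
    exact mul_nonneg hκ.le (mul_nonneg_of_nonpos_of_nonpos (by linarith) (by linarith))


theorem fpairs_decay (n : ℕ) (κ : ℝ) (hn : 0 < n) (hκ : 0 < κ) :
    ((fpairs n (κ / (n : ℝ) ^ 2)).card : ℝ) / (n : ℝ) ^ 2 ≤ 8 / κ ^ 2 := by
  have hnr : (0 : ℝ) < n := by exact_mod_cast hn
  set m := ⌊2 * (n : ℝ) / κ⌋₊ with hm
  have hmr : (m : ℝ) ≤ 2 * n / κ := Nat.floor_le (by positivity)
  have key : ∀ a b : ℕ, a ≤ b → n < a + b → (a : ℝ) * b * (κ / (n : ℝ) ^ 2) ≤ 1 → a ≤ m := by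
    intro a b hab hs hc
    rw [hm]
    refine Nat.le_floor ?_
    rw [le_div_iff₀ hκ]
    rw [mul_div_assoc', div_le_one (by positivity)] at hc
    have hb : (n : ℝ) ≤ 2 * b := by exact_mod_cast (by omega : n ≤ 2 * b)
    have : (a : ℝ) * κ * n ≤ 2 * n * n := by
      have h0 : 0 ≤ (a : ℝ) * κ := by positivity
      nlinarith
    exact le_of_mul_le_mul_right this hnr
  have c1 : ((fpairs n (κ / (n : ℝ) ^ 2)).filter (fun p => p.1 ≤ p.2)).card ≤ m * m := by
    have : m * m = ((Finset.Icc 1 m) ×ˢ (Finset.range m)).card := by simp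
    rw [this]
    refine Finset.card_le_card_of_injOn (fun p => (p.1, n - p.2)) ?_ ?_
    · intro p hp
      rw [Finset.mem_coe, Finset.mem_filter, fpairs, Finset.mem_filter, Finset.mem_product, Finset.mem_Icc, Finset.mem_Icc] at hp
      have := key p.1 p.2 hp.2 hp.1.2.1 hp.1.2.2.2
      rw [Finset.mem_coe, Finset.mem_product, Finset.mem_Icc, Finset.mem_range]
      simp only
      omega
    · intro p hp p' hp' he
      rw [Finset.mem_coe, Finset.mem_filter, fpairs, Finset.mem_filter, Finset.mem_product, Finset.mem_Icc, Finset.mem_Icc] at hp hp'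
      simp only [Prod.mk.injEq] at he
      exact Prod.ext he.1 (by omega)
  have c2 : ((fpairs n (κ / (n : ℝ) ^ 2)).filter (fun p => ¬ p.1 ≤ p.2)).card ≤ m * m := by
    have : m * m = ((Finset.Icc 1 m) ×ˢ (Finset.range m)).card := by simp
    rw [this]
    refine Finset.card_le_card_of_injOn (fun p => (p.2, n - p.1)) ?_ ?_
    · intro p hp
      rw [Finset.mem_coe, Finset.mem_filter, fpairs, Finset.mem_filter, Finset.mem_product, Finset.mem_Icc, Finset.mem_Icc] at hp
      have := key p.2 p.1 (by omega) (by omega) (by rw [mul_comm (p.2 : ℝ)]; exact hp.1.2.2.2)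
      rw [Finset.mem_coe, Finset.mem_product, Finset.mem_Icc, Finset.mem_range]
      simp only
      omega
    · intro p hp p' hp' he
      rw [Finset.mem_coe, Finset.mem_filter, fpairs, Finset.mem_filter, Finset.mem_product, Finset.mem_Icc, Finset.mem_Icc] at hp hp'
      simp only [Prod.mk.injEq] at he
      exact Prod.ext (by omega) he.1
  have c3 := Finset.card_filter_add_card_filter_not (s := fpairs n (κ / (n : ℝ) ^ 2)) (fun p => p.1 ≤ p.2)
  have c4 : (fpairs n (κ / (n : ℝ) ^ 2)).card ≤ 2 * (m * m) := by omega
  have c5 : ((fpairs n (κ / (n : ℝ) ^ 2)).card : ℝ) ≤ 2 * (m * m) := by exact_mod_cast c4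
  rw [div_le_iff₀ (by positivity)]
  refine c5.trans ?_
  calc 2 * ((m : ℝ) * m) ≤ 2 * ((2 * n / κ) * (2 * n / κ)) := by gcongr
    _ = _ := by field_simp; ring

noncomputable def gN (n : ℕ) (s : ℝ) : ℝ :=
  2 * Real.exp (2 * s) * (((fpairs n (Real.exp (2 * s) / (n : ℝ) ^ 2)).card : ℝ) / (n : ℝ) ^ 2)

theorem gN_tendsto (s : ℝ) : Tendsto (fun n => gN n s) atTop (nhds (etaLog s)) := by
  rw [eta_area]
  exact (fpairs_asym (Real.exp (2 * s)) (Real.exp_pos _)).const_mul _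

theorem gN_bound (n : ℕ) (hn : 0 < n) (s : ℝ) : ‖gN n s‖ ≤ 16 * Real.exp (-2 * s) := by
  have h := fpairs_decay n (Real.exp (2 * s)) hn (Real.exp_pos _)
  have hp := Real.exp_pos (2 * s)
  rw [Real.norm_of_nonneg (by unfold gN; positivity), gN]
  calc _ ≤ 2 * Real.exp (2 * s) * (8 / Real.exp (2 * s) ^ 2) := by gcongr
    _ = 16 * (Real.exp (2 * s))⁻¹ := by field_simp; norm_num
    _ = _ := by rw [← Real.exp_neg]; ring_nf

theorem fpairs_subset (n : ℕ) (t : ℝ) : fpairs n t = (fpairs n 0).filter (fun p => (p.1 : ℝ) * p.2 * t ≤ 1) := by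
  unfold fpairs
  rw [Finset.filter_filter]
  refine Finset.filter_congr fun p _ => ?_
  simp only [mul_zero, zero_le_one, and_true]
  tauto

theorem piece_integral (n : ℕ) (hn : 0 < n) (D : ℝ) (hD : 0 < D) (δ : ℝ) (hδ : 0 < δ) (σ : ℝ) (hσ : Real.exp (2 * σ) = δ * (n : ℝ) ^ 2) :
    IntegrableOn (fun s => if D * (Real.exp (2 * s) / (n : ℝ) ^ 2) ≤ 1 then 2 * Real.exp (2 * s) / (n : ℝ) ^ 2 else 0) (Set.Ioi σ) ∧
    ∫ s in Set.Ioi σ, (if D * (Real.exp (2 * s) / (n : ℝ) ^ 2) ≤ 1 then 2 * Real.exp (2 * s) / (n : ℝ) ^ 2 else 0) =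
      if D * δ ≤ 1 then 1 / D - δ else 0 := by
  have hnr : (0 : ℝ) < n := by exact_mod_cast hn
  set b := 1 / 2 * Real.log ((n : ℝ) ^ 2 / D) with hb
  have heb : Real.exp (2 * b) = (n : ℝ) ^ 2 / D := by
    rw [hb, ← mul_assoc]; norm_num; rw [Real.exp_log (by positivity)]
  have hiff : ∀ s : ℝ, D * (Real.exp (2 * s) / (n : ℝ) ^ 2) ≤ 1 ↔ s ≤ b := by
    intro s
    rw [mul_div_assoc', div_le_one (by positivity), ← le_div_iff₀' hD, ← heb, Real.exp_le_exp]
    constructor <;> intro h <;> linarith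
  have hfun : (fun s => if D * (Real.exp (2 * s) / (n : ℝ) ^ 2) ≤ 1 then 2 * Real.exp (2 * s) / (n : ℝ) ^ 2 else 0)
      = (Set.Iic b).indicator (fun s => 2 * Real.exp (2 * s) / (n : ℝ) ^ 2) := by
    ext s
    simp only [Set.indicator, Set.mem_Iic, hiff]
  have hcont : Continuous (fun s : ℝ => 2 * Real.exp (2 * s) / (n : ℝ) ^ 2) := by fun_prop
  rw [hfun]
  constructor
  · rw [← integrable_indicator_iff measurableSet_Ioi, Set.indicator_indicator, integrable_indicator_iff (measurableSet_Ioi.inter measurableSet_Iic),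
      Set.Ioi_inter_Iic]
    exact hcont.integrableOn_Ioc
  · rw [setIntegral_indicator measurableSet_Iic, Set.Ioi_inter_Iic]
    have hcond : D * δ ≤ 1 ↔ σ ≤ b := by
      rw [← hiff, hσ]
      have : D * (δ * (n : ℝ) ^ 2 / (n : ℝ) ^ 2) = D * δ := by field_simp
      rw [this]
    by_cases hc : σ ≤ b
    · rw [if_pos (hcond.2 hc), ← intervalIntegral.integral_of_le hc,
        intervalIntegral.integral_eq_sub_of_hasDerivAt (f := fun s => Real.exp (2 * s) / (n : ℝ) ^ 2)]
      · rw [heb, hσ]; field_simp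
      · intro s _
        have h1 : HasDerivAt (fun s : ℝ => 2 * s) 2 s := by simpa using (hasDerivAt_id s).const_mul 2
        have h2 := h1.exp.div_const ((n : ℝ) ^ 2)
        rwa [mul_comm] at h2
      · exact hcont.intervalIntegrable _ _
    · rw [if_neg (fun h => hc (hcond.1 h)), Set.Ioc_eq_empty (by push Not at hc; exact not_lt.2 hc.le)]
      simp

theorem gN_integral (n : ℕ) (hn : 0 < n) (δ : ℝ) (hδ : 0 < δ) (σ : ℝ) (hσ : Real.exp (2 * σ) = δ * (n : ℝ) ^ 2) :
    ∑ p ∈ fpairs n δ, (1 / ((p.1 : ℝ) * p.2) - δ) = ∫ s in Set.Ioi σ, gN n s := by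
  have hpos : ∀ p ∈ fpairs n 0, (0 : ℝ) < (p.1 : ℝ) * p.2 := by
    intro p hp
    rw [fpairs, Finset.mem_filter, Finset.mem_product, Finset.mem_Icc, Finset.mem_Icc] at hp
    have h1 : (0 : ℝ) < p.1 := by exact_mod_cast hp.1.1.1
    have h2 : (0 : ℝ) < p.2 := by exact_mod_cast hp.1.2.1
    positivity
  have e1 : ∀ s, gN n s = ∑ p ∈ fpairs n 0, (if (p.1 : ℝ) * p.2 * (Real.exp (2 * s) / (n : ℝ) ^ 2) ≤ 1 then 2 * Real.exp (2 * s) / (n : ℝ) ^ 2 else 0) := by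
    intro s
    rw [gN, fpairs_subset, ← Finset.sum_filter, Finset.sum_const, nsmul_eq_mul]
    ring
  simp_rw [e1]
  rw [integral_finsetSum _ (fun p hp => (piece_integral n hn _ (hpos p hp) δ hδ σ hσ).1), fpairs_subset, Finset.sum_filter]
  exact Finset.sum_congr rfl fun p hp => (piece_integral n hn _ (hpos p hp) δ hδ σ hσ).2.symm

theorem main_term (L : ℝ) (δ : ℕ → ℝ) (hδpos : ∀ k, 0 < δ k) (n : ℕ → ℕ)
    (hnt : Tendsto n atTop atTop) (hlim : Tendsto (fun k => δ k * (n k : ℝ) ^ 2) atTop (nhds (Real.exp (2 * L)))) :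
    Tendsto (fun k => ∑ p ∈ fpairs (n k) (δ k), (1 / ((p.1 : ℝ) * p.2) - δ k)) atTop (nhds (∫ s in Set.Ioi L, etaLog s)) := by
  set σ : ℕ → ℝ := fun k => 1 / 2 * Real.log (δ k * (n k : ℝ) ^ 2) with hσ
  have hσt : Tendsto σ atTop (nhds L) := by
    have := (hlim.log (Real.exp_pos _).ne').const_mul (1 / 2)
    rw [Real.log_exp] at this
    convert this using 2
    ring
  have hev : ∀ᶠ k in atTop, 0 < n k := hnt.eventually_gt_atTop 0
  have hstep : ∀ᶠ k in atTop, ∫ s, (Set.Ioi (σ k)).indicator (gN (n k)) s = ∑ p ∈ fpairs (n k) (δ k), (1 / ((p.1 : ℝ) * p.2) - δ k) := by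
    filter_upwards [hev] with k hk
    have hnr : (0 : ℝ) < n k := by exact_mod_cast hk
    have := hδpos k
    rw [integral_indicator measurableSet_Ioi, gN_integral (n k) hk (δ k) (hδpos k) (σ k)]
    simp only [hσ]
    rw [← mul_assoc]; norm_num; rw [Real.exp_log (by positivity)]
  refine Tendsto.congr' hstep ?_
  rw [← integral_indicator measurableSet_Ioi]
  have hgm : ∀ m : ℕ, Measurable (gN m) := by
    intro m
    have e1 : gN m = fun s => 2 * Real.exp (2 * s) * ((∑ p ∈ fpairs m 0, (if (p.1 : ℝ) * p.2 * (Real.exp (2 * s) / (m : ℝ) ^ 2) ≤ 1 then (1 : ℝ) else 0)) / (m : ℝ) ^ 2) := by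
      ext s
      rw [gN, fpairs_subset, Finset.card_filter]
      push_cast
      rfl
    rw [e1]
    refine Measurable.mul (by fun_prop) (Measurable.div_const ?_ _)
    refine Finset.measurable_fun_sum _ fun p _ => ?_
    refine Measurable.ite ?_ measurable_const measurable_const
    exact measurableSet_le (by fun_prop) measurable_const
  refine tendsto_integral_filter_of_dominated_convergence ((Set.Ioi (L - 1)).indicator (fun s => 16 * Real.exp (-2 * s))) ?_ ?_ ?_ ?_
  · exact Eventually.of_forall fun k => ((hgm _).indicator measurableSet_Ioi).aestronglyMeasurable
  · filter_upwards [hev, hσt.eventually_const_lt (show L - 1 < L by linarith)] with k hk hk2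
    refine Eventually.of_forall fun s => ?_
    by_cases hs : s ∈ Set.Ioi (σ k)
    · have hs2 : s ∈ Set.Ioi (L - 1) := lt_trans hk2 hs
      rw [Set.indicator_of_mem hs, Set.indicator_of_mem hs2]
      exact gN_bound _ hk s
    · rw [Set.indicator_of_notMem hs, norm_zero]
      exact Set.indicator_nonneg (fun _ _ => by positivity) _
  · rw [integrable_indicator_iff measurableSet_Ioi]
    exact (integrableOn_exp_mul_Ioi (by norm_num) _).const_mul 16
  · have hne : ∀ᵐ s : ℝ, s ≠ L := by
      rw [ae_iff]; simp
    filter_upwards [hne] with s hs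
    rcases lt_or_gt_of_ne hs with h | h
    · rw [Set.indicator_of_notMem (by simpa using h.le)]
      refine tendsto_const_nhds.congr' ?_
      filter_upwards [hσt.eventually_const_lt h] with k hk
      rw [Set.indicator_of_notMem (by simpa using hk.le)]
    · rw [Set.indicator_of_mem (by exact h)]
      refine ((gN_tendsto s).comp hnt).congr' ?_
      filter_upwards [hσt.eventually_lt_const h] with k hk
      rw [Set.indicator_of_mem (by exact hk)]
      rfl

theorem floor_facts (L : ℝ) (δ : ℕ → ℝ) (hδpos : ∀ k, 0 < δ k) (hδ : Tendsto δ atTop (nhds 0)) (n : ℕ → ℕ)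
    (hn : ∀ k, n k = ⌊Real.exp L / Real.sqrt (δ k)⌋₊) :
    Tendsto n atTop atTop ∧ Tendsto (fun k => δ k * (n k : ℝ) ^ 2) atTop (nhds (Real.exp (2 * L))) := by
  have hsq : Tendsto (fun k => Real.sqrt (δ k)) atTop (nhds 0) := by
    have := hδ.sqrt
    rwa [Real.sqrt_zero] at this
  have hsp : ∀ k, 0 < Real.sqrt (δ k) := fun k => Real.sqrt_pos.2 (hδpos k)
  have hinf : Tendsto (fun k => Real.exp L / Real.sqrt (δ k)) atTop atTop := by
    have h1 : Tendsto (fun k => Real.sqrt (δ k)) atTop (nhdsWithin 0 (Set.Ioi 0)) :=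
      tendsto_nhdsWithin_iff.2 ⟨hsq, Eventually.of_forall hsp⟩
    simp_rw [div_eq_mul_inv]
    exact (tendsto_inv_nhdsGT_zero.comp h1).const_mul_atTop (Real.exp_pos L)
  refine ⟨?_, ?_⟩
  · rw [show n = fun k => ⌊Real.exp L / Real.sqrt (δ k)⌋₊ from funext hn]
    exact tendsto_nat_floor_atTop.comp hinf
  · have h2 : Tendsto (fun k => Real.sqrt (δ k) * (n k : ℝ)) atTop (nhds (Real.exp L)) := by
      have hlow : Tendsto (fun k => Real.exp L - Real.sqrt (δ k)) atTop (nhds (Real.exp L)) := by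
        simpa using hsq.const_sub (Real.exp L)
      refine tendsto_of_tendsto_of_tendsto_of_le_of_le hlow tendsto_const_nhds ?_ ?_
      · intro k
        have h := Nat.lt_floor_add_one (Real.exp L / Real.sqrt (δ k))
        rw [← hn, div_lt_iff₀ (hsp k)] at h
        simp only
        linarith
      · intro k
        have h := Nat.floor_le (div_pos (Real.exp_pos L) (hsp k)).le
        rw [← hn, le_div_iff₀ (hsp k)] at h
        simp only
        linarith
    have h3 := h2.pow 2
    rw [← Real.exp_nat_mul] at h3
    push_cast at h3
    refine h3.congr fun k => ?_
    rw [mul_pow, Real.sq_sqrt (hδpos k).le]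

theorem smallest_denominator_log_limit_law_discrete
    (x₀ : ℝ) (hx₀ : x₀ ∈ Set.Icc (0 : ℝ) 1) (L : ℝ)
    (δ : ℕ → ℝ) (hδpos : ∀ k, 0 < δ k) (hδ : Tendsto δ atTop (nhds 0))
    (N : ℕ → ℕ) (hNpos : ∀ k, 0 < N k) (hN : Tendsto N atTop atTop)
    (c : ℝ) (hc : 0 < c) (hNδ : ∀ k, c ≤ (N k : ℝ) * δ k) :
    Tendsto (fun k : ℕ =>
        (((Finset.Icc 1 (N k)).filter (fun j : ℕ =>
          L - (1 / 2) * Real.log (δ k) <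
            Real.log (qmin (x₀ + (j : ℝ) / (N k : ℝ)) (δ k)))).card : ℝ) / (N k : ℝ))
      atTop (nhds (∫ s in Set.Ioi L, etaLog s)) := by
  obtain ⟨h1, h2⟩ := floor_facts L δ hδpos hδ (fun k => ⌊Real.exp L / Real.sqrt (δ k)⌋₊) (fun _ => rfl)
  exact reduction x₀ L δ hδpos hδ N hNpos c hc hNδ _ (fun _ => rfl) h1 _ (main_term L δ hδpos _ h1 h2)
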